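/- Let k be any field and n ≥ 2. The Brauer algebra Br(A_{n−1}, k(δ), δ) over the rational function field k(δ) is Morita equivalent to the direct sum of group algebras ⊕_{i=0}^{⌊n/2⌋} k(δ)[S_{n−2i}], where S_m denotes the symmetric group on m letters (with S_0 the trivial group). -/

import Mathlib

open FreeAlgebra

/-- Two rings are Morita equivalent if their categories of left modules are equivalent. -/
def MoritaEquivalent (A : Type u) (B : Type u) [Ring A] [Ring B] : Prop :=
  Nonempty (ModuleCat.{u} A ≌ ModuleCat.{u} B)
/-- The path graph (Coxeter diagram of type `A_n`) on nodes `1, …, n`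
(realized as `Fin n`, node `i` corresponding to index `i-1`): node `i` is
adjacent to node `i+1` for `1 ≤ i ≤ n-1`. -/
def typeA (n : ℕ) : SimpleGraph (Fin n) :=
  SimpleGraph.fromRel (fun i j => (i : ℕ) + 1 = (j : ℕ))

/-- The Coxeter diagram of type `D_n` (`n ≥ 4`) on nodes `1, …, n` (realized as
`Fin n`, node `i` corresponding to index `i-1`): nodes `1` and `2` are both
adjacent to node `3`, and nodes `i`, `i+1` are adjacent for `3 ≤ i ≤ n-1`. -/
def typeD (n : ℕ) : SimpleGraph (Fin n) :=
  SimpleGraph.fromRel (fun i j =>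
    ((i : ℕ) = 0 ∧ (j : ℕ) = 2) ∨ ((i : ℕ) = 1 ∧ (j : ℕ) = 2) ∨
      (2 ≤ (i : ℕ) ∧ (i : ℕ) + 1 = (j : ℕ)))

/-- The Coxeter diagram of type `E_n` (`n = 6, 7, 8`) on nodes `1, …, n`
(realized as `Fin n`, node `i` corresponding to index `i-1`): a path on nodes
`1, 3, 4, …, n` together with node `2` attached to node `4`. -/
def typeE (n : ℕ) : SimpleGraph (Fin n) :=
  SimpleGraph.fromRel (fun i j =>
    ((i : ℕ) = 0 ∧ (j : ℕ) = 2) ∨ ((i : ℕ) = 1 ∧ (j : ℕ) = 3) ∨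
      (2 ≤ (i : ℕ) ∧ (i : ℕ) + 1 = (j : ℕ)))
/-- The defining relations of the Brauer algebra `Br(Q, R, δ)` of simply-laced
type given by the graph `Q`, imposed on the free `R`-algebra on the generators
`R_1, …, R_n` (encoded as `Sum.inl i`) and `E_1, …, E_n` (encoded as `Sum.inr i`). -/
inductive BrauerRel (n : ℕ) (Q : SimpleGraph (Fin n)) (R : Type*) [CommRing R] (δ : R) :
    FreeAlgebra R (Fin n ⊕ Fin n) → FreeAlgebra R (Fin n ⊕ Fin n) → Prop
  /-- `R_i² = 1` -/
  | rsq (i : Fin n) : BrauerRel n Q R δ (ι R (.inl i) * ι R (.inl i)) 1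
  /-- `R_i E_i = E_i` -/
  | re (i : Fin n) : BrauerRel n Q R δ (ι R (.inl i) * ι R (.inr i)) (ι R (.inr i))
  /-- `E_i R_i = E_i` -/
  | er (i : Fin n) : BrauerRel n Q R δ (ι R (.inr i) * ι R (.inl i)) (ι R (.inr i))
  /-- `E_i² = δ·E_i` -/
  | esq (i : Fin n) : BrauerRel n Q R δ (ι R (.inr i) * ι R (.inr i)) (δ • ι R (.inr i))
  /-- `R_i R_j = R_j R_i` whenever `i ≁ j` -/
  | rr (i j : Fin n) (hne : i ≠ j) (hadj : ¬ Q.Adj i j) :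
      BrauerRel n Q R δ (ι R (.inl i) * ι R (.inl j)) (ι R (.inl j) * ι R (.inl i))
  /-- `E_i R_j = R_j E_i` whenever `i ≁ j` -/
  | erc (i j : Fin n) (hne : i ≠ j) (hadj : ¬ Q.Adj i j) :
      BrauerRel n Q R δ (ι R (.inr i) * ι R (.inl j)) (ι R (.inl j) * ι R (.inr i))
  /-- `E_i E_j = E_j E_i` whenever `i ≁ j` -/
  | ee (i j : Fin n) (hne : i ≠ j) (hadj : ¬ Q.Adj i j) :
      BrauerRel n Q R δ (ι R (.inr i) * ι R (.inr j)) (ι R (.inr j) * ι R (.inr i))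
  /-- `R_i R_j R_i = R_j R_i R_j` whenever `i ∼ j` -/
  | braid (i j : Fin n) (hadj : Q.Adj i j) :
      BrauerRel n Q R δ (ι R (.inl i) * ι R (.inl j) * ι R (.inl i))
        (ι R (.inl j) * ι R (.inl i) * ι R (.inl j))
  /-- `R_j R_i E_j = E_i E_j` whenever `i ∼ j` -/
  | rre (i j : Fin n) (hadj : Q.Adj i j) :
      BrauerRel n Q R δ (ι R (.inl j) * ι R (.inl i) * ι R (.inr j))
        (ι R (.inr i) * ι R (.inr j))
  /-- `R_i E_j R_i = R_j E_i R_j` whenever `i ∼ j` -/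
  | rer (i j : Fin n) (hadj : Q.Adj i j) :
      BrauerRel n Q R δ (ι R (.inl i) * ι R (.inr j) * ι R (.inl i))
        (ι R (.inl j) * ι R (.inr i) * ι R (.inl j))

/-- The Brauer algebra `Br(Q, R, δ)` of simply-laced type `Q` over the
commutative ring `R` with parameter `δ ∈ R`. -/
abbrev BrauerAlgebra (n : ℕ) (Q : SimpleGraph (Fin n)) (R : Type*) [CommRing R] (δ : R) :=
  RingQuot (BrauerRel n Q R δ)

open CategoryTheory Equiv Module

/-!
Write `K` for the field. The Brauer algebra of type `A_n` is spanned by the Brauer diagrams on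
`n + 1` points, and it acts by stacking on the free module over the half diagrams with `i` arcs and
`n + 1 - 2 i` labelled vertical strands. This action commutes with the permutations of the labels,
which act freely, so that their commutant is a matrix algebra over `K[S_{n + 1 - 2 i}]`.

The diagrams with `i` arcs already span this commutant: expressing them in its standard basis leads
to the Gram matrix of half diagrams, whose diagonal entries have a larger degree in `δ` than the
other ones, so its determinant does not vanish if `δ` is transcendental. Diagrams with more than
`i` arcs act by zero, so the homomorphism to the product of the commutants for all `i` is
triangular, hence surjective. The number of diagrams bounds the dimension of the Brauer algebra by
that of the product, so it is an isomorphism onto a product of matrix algebras, which is Morita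
equivalent to the product of the group algebras.
-/

namespace MoritaEquivalent

universe u v

section Basic

variable {A B C : Type u} [Ring A] [Ring B] [Ring C]

lemma trans (h : MoritaEquivalent A B) (h' : MoritaEquivalent B C) : MoritaEquivalent A C :=
  Nonempty.map2 CategoryTheory.Equivalence.trans h h'

lemma of_ringEquiv (e : A ≃+* B) : MoritaEquivalent A B :=
  ⟨(ModuleCat.restrictScalarsEquivalenceOfRingEquiv e).symm⟩

lemma matrix (A : Type u) [Ring A] {ι : Type} [Fintype ι] [DecidableEq ι] [Nonempty ι] :
    MoritaEquivalent (Matrix ι ι A) A :=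
  ⟨(ModuleCat.matrixEquivalence A (Classical.arbitrary ι)).symm⟩

end Basic

section Pi

variable {ι : Type v} (A : ι → Type u) [∀ i, Ring (A i)]

/-- The functor sending a family of modules `M i` over the rings `A i` to the module `Π i, M i`
over the product ring `Π i, A i`. -/
def piFunctor : (∀ i, ModuleCat.{u} (A i)) ⥤ ModuleCat.{max u v} (∀ i, A i) where
  obj M := ModuleCat.of (∀ i, A i) (∀ i, M i)
  map {M N} f := ModuleCat.ofHom (X := ∀ i, M i) (Y := ∀ i, N i)
    { toFun := fun m i ↦ f i (m i)
      map_add' := fun _ _ ↦ funext fun i ↦ map_add (f i).hom _ _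
      map_smul' := fun _ _ ↦ funext fun i ↦ map_smul (f i).hom _ _ }

@[simp]
lemma piFunctor_map_apply {M N : ∀ i, ModuleCat.{u} (A i)} (f : M ⟶ N) (m : ∀ i, M i) (i : ι) :
    ((piFunctor A).map f).hom m i = f i (m i) :=
  rfl

instance : (piFunctor A).Faithful where
  map_injective {M N} f g h := by
    classical
    ext i m
    simpa using congr(($h).hom (Pi.single i m : ∀ i, M i) i)

lemma single_one_smul [DecidableEq ι] (M : ∀ i, ModuleCat.{u} (A i)) (i : ι) (m : ∀ i, M i) :
    (Pi.single i 1 : ∀ i, A i) • m = Pi.single i (m i) := by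
  ext j
  obtain rfl | h := eq_or_ne j i <;> simp_all

instance : (piFunctor A).Full where
  map_surjective {M N} f := by
    classical
    let F : (∀ i, M i) →ₗ[∀ i, A i] ∀ i, N i := f.hom
    have hF (m : ∀ i, M i) (i : ι) : F (Pi.single i (m i)) i = F m i := by
      rw [← single_one_smul, map_smul, single_one_smul, Pi.single_eq_same]
    refine ⟨fun i ↦ ModuleCat.ofHom
      { toFun := fun m ↦ F (Pi.single i m) i
        map_add' := fun m m' ↦ by rw [Pi.single_add, map_add, Pi.add_apply]
        map_smul' := fun a m ↦ ?_ }, ?_⟩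
    · have h : Pi.single i (a • m) = (Pi.single i a : ∀ i, A i) • (Pi.single i m : ∀ i, M i) := by
        ext j
        obtain rfl | h := eq_or_ne j i <;> simp_all
      simp [h]
    · ext m
      exact funext (hF m)

section Component

variable [DecidableEq ι] (M : Type*) [AddCommGroup M] [Module (∀ i, A i) M] (i : ι)

/-- The component `1ᵢ M` of a module `M` over the product ring `Π i, A i`, where `1ᵢ` is the `i`-th
standard central idempotent. -/
def component : AddSubgroup M :=
  (DistribSMul.toAddMonoidHom M (Pi.single i 1 : ∀ i, A i)).range

variable {A M i}

lemma single_smul_mem_component (a : A i) (m : M) :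
    (Pi.single i a : ∀ i, A i) • m ∈ component A M i :=
  ⟨(Pi.single i a : ∀ i, A i) • m, by
    simp [smul_smul, ← Pi.single_mul]⟩

lemma single_one_smul_of_mem_component {m : M} (hm : m ∈ component A M i) :
    (Pi.single i 1 : ∀ i, A i) • m = m := by
  obtain ⟨m, rfl⟩ := hm
  simp [smul_smul, ← Pi.single_mul]

lemma single_one_smul_eq_zero {j : ι} (hij : i ≠ j) {m : M} (hm : m ∈ component A M j) :
    (Pi.single i 1 : ∀ i, A i) • m = 0 := by
  have h : (Pi.single i 1 * Pi.single j 1 : ∀ i, A i) = 0 := by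
    ext l
    obtain rfl | h := eq_or_ne l i <;> simp_all
  rw [← single_one_smul_of_mem_component hm, smul_smul, h, zero_smul]

instance : Module (A i) (component A M i) where
  smul a m := ⟨_, single_smul_mem_component a m.1⟩
  one_smul m := Subtype.ext (single_one_smul_of_mem_component m.2)
  mul_smul a b m := Subtype.ext <| by
    change (Pi.single i (a * b) : ∀ i, A i) • m.1 = Pi.single i a • Pi.single i b • m.1
    rw [Pi.single_mul, mul_smul]
  smul_zero a := Subtype.ext (smul_zero (Pi.single i a : ∀ i, A i))
  smul_add a m m' := Subtype.ext (smul_add (Pi.single i a : ∀ i, A i) m.1 m'.1)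
  add_smul a b m := Subtype.ext <| by
    change (Pi.single i (a + b) : ∀ i, A i) • m.1 = Pi.single i a • m.1 + Pi.single i b • m.1
    rw [Pi.single_add, add_smul]
  zero_smul m := Subtype.ext <| by
    change (Pi.single i 0 : ∀ i, A i) • m.1 = 0
    rw [Pi.single_zero, zero_smul]

variable (A M) in
/-- The projections of a module over a product ring onto its components. -/
def toComponents : M →ₗ[∀ i, A i] ∀ i, component A M i where
  toFun m i := ⟨_, single_smul_mem_component 1 m⟩
  map_add' m m' := funext fun i ↦ Subtype.ext (smul_add _ m m')
  map_smul' a m := funext fun i ↦ Subtype.ext <| by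
    change (Pi.single i 1 : ∀ i, A i) • a • m = (Pi.single i (a i) : ∀ i, A i) •
      (Pi.single i 1 : ∀ i, A i) • m
    rw [smul_smul, smul_smul, ← Pi.single_mul, mul_one]
    congr 1
    ext j
    obtain rfl | h := eq_or_ne j i <;> simp_all

lemma toComponents_bijective [Finite ι] : Function.Bijective (toComponents A M) := by
  have := Fintype.ofFinite ι
  constructor
  · rw [injective_iff_map_eq_zero]
    intro m hm
    calc m = (∑ i, Pi.single i ((1 : ∀ i, A i) i) : ∀ i, A i) • m := by
          rw [Finset.univ_sum_single, one_smul]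
      _ = 0 := by
          rw [Finset.sum_smul]
          exact Finset.sum_eq_zero fun i _ ↦ congr(($hm i : M))
  · intro f
    refine ⟨∑ j, (f j : M), funext fun i ↦ Subtype.ext ?_⟩
    change (Pi.single i 1 : ∀ i, A i) • ∑ j, (f j : M) = f i
    rw [Finset.smul_sum, Finset.sum_eq_single_of_mem i (Finset.mem_univ i),
      single_one_smul_of_mem_component (f i).2]
    exact fun j _ hj ↦ single_one_smul_eq_zero hj.symm (f j).2

end Component

end Pi

lemma pi {ι : Type} [Finite ι] {A B : ι → Type u} [∀ i, Ring (A i)] [∀ i, Ring (B i)]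
    (h : ∀ i, MoritaEquivalent (A i) (B i)) : MoritaEquivalent (∀ i, A i) (∀ i, B i) := by
  classical
  have essSurj (A : ι → Type u) [∀ i, Ring (A i)] : (piFunctor A).EssSurj :=
    ⟨fun M ↦ ⟨fun i ↦ ModuleCat.of (A i) (component A M i), ⟨
      (LinearEquiv.ofBijective (toComponents A M) toComponents_bijective).toModuleIso.symm⟩⟩⟩
  have isEquivalence (A : ι → Type u) [∀ i, Ring (A i)] : (piFunctor A).IsEquivalence :=
    { essSurj := essSurj A }
  exact ⟨(piFunctor A).asEquivalence.symm.trans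
    ((CategoryTheory.Equivalence.pi fun i ↦ (h i).some).trans (piFunctor B).asEquivalence)⟩

end MoritaEquivalent

/-! ### The Coxeter presentation of the symmetric group -/

/-- The elements `t 0, …, t (k - 1)` of a group are involutions satisfying the Coxeter relations
of type `A_k`. -/
structure IsCoxeterFamily {G : Type*} [Group G] (t : ℕ → G) (k : ℕ) : Prop where
  mul_self : ∀ i < k, t i * t i = 1
  comm : ∀ i j, i + 2 ≤ j → j < k → t i * t j = t j * t i
  braid : ∀ i, i + 1 < k → t i * t (i + 1) * t i = t (i + 1) * t i * t (i + 1)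

namespace IsCoxeterFamily

open Subgroup (closure)

variable {G : Type*} [Group G] {t : ℕ → G} {k d i : ℕ}

/-- The descending word `t k * t (k - 1) * ⋯ * t (k - d + 1)` of length `d`. For `d ≤ k + 1` these
are the minimal representatives of the right cosets of the parabolic subgroup `⟨t 0, …, t (k - 1)⟩`
in `⟨t 0, …, t k⟩`. -/
def descendingWord (t : ℕ → G) (k : ℕ) : ℕ → G
  | 0 => 1
  | d + 1 => descendingWord t k d * t (k - d)

lemma of_succ (h : IsCoxeterFamily t (k + 1)) : IsCoxeterFamily t k :=
  ⟨fun i hi ↦ h.mul_self i (by omega), fun i j hij hj ↦ h.comm i j hij (by omega),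
    fun i hi ↦ h.braid i (by omega)⟩

lemma mem_closure (t : ℕ → G) (hi : i < k) : t i ∈ closure (t '' Set.Iio k) :=
  Subgroup.subset_closure (Set.mem_image_of_mem t hi)

lemma descendingWord_mul_of_add_lt (h : IsCoxeterFamily t (k + 1)) (hi : i + d < k) :
    descendingWord t k d * t i = t i * descendingWord t k d := by
  induction d with
  | zero => simp [descendingWord]
  | succ d ih =>
    rw [descendingWord, mul_assoc, ← h.comm i (k - d) (by omega) (by omega), ← mul_assoc,
      ih (by omega), mul_assoc]

lemma descendingWord_mul_succ (h : IsCoxeterFamily t (k + 1)) (hd : d ≤ k + 1) (hi : i < k)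
    (hid : k < i + d) : descendingWord t k d * t (i + 1) = t i * descendingWord t k d := by
  induction d with
  | zero => omega
  | succ d ih =>
    rcases Nat.lt_or_ge k (i + d) with h1 | h1
    · rw [descendingWord, mul_assoc, h.comm (k - d) (i + 1) (by omega) (by omega), ← mul_assoc,
        ih (by omega) (by omega), mul_assoc]
    · obtain ⟨d, rfl⟩ : ∃ d', d = d' + 1 := ⟨d - 1, by omega⟩
      have hlast : k - (d + 1) = i := by omega
      have hpenultimate : k - d = i + 1 := by omega
      calc descendingWord t k (d + 1 + 1) * t (i + 1)
          = descendingWord t k d * (t (i + 1) * t i * t (i + 1)) := by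
            simp only [descendingWord, hlast, hpenultimate, mul_assoc]
        _ = descendingWord t k d * t i * (t (i + 1) * t i) := by
            rw [← h.braid i (by omega)]; simp only [mul_assoc]
        _ = t i * descendingWord t k (d + 1 + 1) := by
            rw [h.descendingWord_mul_of_add_lt (by omega)]
            simp only [descendingWord, hlast, hpenultimate, mul_assoc]

lemma exists_eq_mul_descendingWord_mul (h : IsCoxeterFamily t (k + 1)) (hi : i < k + 1)
    (hd : d ≤ k + 1) : ∃ g ∈ closure (t '' Set.Iio k), ∃ d' ≤ k + 1,
      descendingWord t k d * t i = g * descendingWord t k d' := by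
  rcases Nat.lt_trichotomy (i + d) k with hlt | heq | hgt
  · exact ⟨t i, mem_closure t (by omega), d, hd, h.descendingWord_mul_of_add_lt hlt⟩
  · exact ⟨1, one_mem _, d + 1, by omega, by
      rw [descendingWord, one_mul, show k - d = i by omega]⟩
  · rcases Nat.eq_or_lt_of_le hgt with heq' | hgt'
    · obtain ⟨d, rfl⟩ : ∃ d', d = d' + 1 := ⟨d - 1, by omega⟩
      refine ⟨1, one_mem _, d, by omega, ?_⟩
      rw [descendingWord, show k - d = i by omega, mul_assoc, h.mul_self i hi, mul_one, one_mul]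
    · obtain ⟨i, rfl⟩ : ∃ i', i = i' + 1 := ⟨i - 1, by omega⟩
      exact ⟨t i, mem_closure t (by omega), d, hd,
        h.descendingWord_mul_succ hd (by omega) (by omega)⟩

lemma exists_eq_mul_descendingWord (h : IsCoxeterFamily t (k + 1)) {w : G}
    (hw : w ∈ closure (t '' Set.Iio (k + 1))) :
    ∃ g ∈ closure (t '' Set.Iio k), ∃ d ≤ k + 1, w = g * descendingWord t k d := by
  have mul_right (x : G) (i : ℕ) (hi : i < k + 1)
      (hx : ∃ g ∈ closure (t '' Set.Iio k), ∃ d ≤ k + 1, x = g * descendingWord t k d) :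
      ∃ g ∈ closure (t '' Set.Iio k), ∃ d ≤ k + 1, x * t i = g * descendingWord t k d := by
    obtain ⟨g, hg, d, hd, rfl⟩ := hx
    obtain ⟨g', hg', d', hd', h'⟩ := h.exists_eq_mul_descendingWord_mul hi hd
    exact ⟨g * g', mul_mem hg hg', d', hd', by rw [mul_assoc, h', mul_assoc]⟩
  induction hw using Subgroup.closure_induction_right with
  | one => exact ⟨1, one_mem _, 0, by omega, by simp [descendingWord]⟩
  | mul_right x _ y hy ih =>
    obtain ⟨i, hi, rfl⟩ := hy
    exact mul_right x i hi ih
  | mul_inv_cancel x _ y hy ih =>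
    obtain ⟨i, hi, rfl⟩ := hy
    rw [inv_eq_of_mul_eq_one_left (h.mul_self i hi)]
    exact mul_right x i hi ih

section Swap

variable {φ : G →* Perm ℕ}

lemma map_apply_of_lt (hφ : ∀ i < k, φ (t i) = swap i (i + 1)) {w : G}
    (hw : w ∈ closure (t '' Set.Iio k)) {x : ℕ} (hx : k < x) : φ w x = x := by
  have hle : closure (t '' Set.Iio k) ≤ (MulAction.stabilizer (Perm ℕ) x).comap φ := by
    rw [Subgroup.closure_le]
    rintro _ ⟨i, hi, rfl⟩
    have hi : i < k := hi
    simpa [hφ i hi] using swap_apply_of_ne_of_ne (a := i) (b := i + 1) (by omega) (by omega)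
  exact hle hw

lemma map_descendingWord_apply (hφ : ∀ i < k + 1, φ (t i) = swap i (i + 1)) (hd : d ≤ k + 1) :
    φ (descendingWord t k d) (k + 1 - d) = k + 1 := by
  induction d with
  | zero => simp [descendingWord]
  | succ d ih =>
    rw [descendingWord, map_mul, Perm.mul_apply, hφ _ (by omega),
      show k + 1 - (d + 1) = k - d by omega, swap_apply_left, show k - d + 1 = k + 1 - d by omega,
      ih (by omega)]

lemma eq_one_of_map_eq_one (h : IsCoxeterFamily t k) (hφ : ∀ i < k, φ (t i) = swap i (i + 1))
    {w : G} (hw : w ∈ closure (t '' Set.Iio k)) (hφw : φ w = 1) : w = 1 := by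
  induction k generalizing w with
  | zero => simpa [Set.Iio_eq_empty_iff.2] using hw
  | succ k ih =>
    obtain ⟨g, hg, d, hd, rfl⟩ := h.exists_eq_mul_descendingWord hw
    have hφ' : ∀ i < k, φ (t i) = swap i (i + 1) := fun i hi ↦ hφ i (by omega)
    obtain rfl | hd0 := Nat.eq_zero_or_pos d
    · rw [descendingWord, mul_one] at hφw ⊢
      exact ih h.of_succ hφ' hg hφw
    · have hlast : φ (g * descendingWord t k d) (k + 1 - d) = k + 1 := by
        rw [map_mul, Perm.mul_apply, map_descendingWord_apply hφ hd,
          map_apply_of_lt hφ' hg k.lt_succ_self]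
      rw [hφw, Perm.one_apply] at hlast
      omega

end Swap

end IsCoxeterFamily

section

variable {P : Type*} [DecidableEq P]

lemma swap_mul_swap_comm {a b c d : P} (hac : a ≠ c) (had : a ≠ d) (hbc : b ≠ c) (hbd : b ≠ d) :
    swap a b * swap c d = swap c d * swap a b :=
  Perm.Disjoint.commute fun x ↦ by
    simp only [swap_apply_def]
    grind

lemma swap_mul_swap_mul_swap_comm {a b c : P} (hab : a ≠ b) (hac : a ≠ c) (hbc : b ≠ c) :
    swap a b * swap b c * swap a b = swap b c * swap a b * swap b c := by
  rw [swap_mul_swap_mul_swap hab hac, swap_comm a b, swap_comm b c,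
    swap_mul_swap_mul_swap hbc.symm hac.symm, swap_comm]

end

section

variable {n : ℕ}

lemma extendDomain_swap_castSucc_succ (i : Fin n) :
    Perm.extendDomainHom Fin.equivSubtype (swap i.castSucc i.succ) = swap (i : ℕ) (i + 1) := by
  ext x
  change Perm.extendDomain _ _ _ = _
  by_cases hx : x < n + 1
  · rw [show x = (Fin.equivSubtype ⟨x, hx⟩ : {i // i < n + 1}) from rfl,
      Perm.extendDomain_apply_image]
    simp only [swap_apply_def, Fin.ext_iff, Fin.equivSubtype_apply, Fin.val_castSucc, Fin.val_succ]
    split_ifs <;> simp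
  · rw [Perm.extendDomain_apply_not_subtype (p := fun i ↦ i < n + 1) _ _ hx,
      swap_apply_of_ne_of_ne] <;> omega

/-- The `i`-th Coxeter generator of the graph of the homomorphism to be constructed in
`exists_hom_perm_swap_castSucc_succ`; it is `1` for `n ≤ i`. -/
def graphGenerator {U : Type*} [Group U] (r : Fin n → U) (i : ℕ) : Perm (Fin (n + 1)) × U :=
  if h : i < n then (swap (Fin.castSucc ⟨i, h⟩) (Fin.succ ⟨i, h⟩), r ⟨i, h⟩) else 1

lemma graphGenerator_val {U : Type*} [Group U] (r : Fin n → U) (i : Fin n) :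
    graphGenerator r i = (swap i.castSucc i.succ, r i) :=
  dif_pos i.2

lemma isCoxeterFamily_graphGenerator {U : Type*} [Group U] {r : Fin n → U}
    (mul_self : ∀ i, r i * r i = 1)
    (comm : ∀ i j : Fin n, (i : ℕ) + 2 ≤ j → r i * r j = r j * r i)
    (braid : ∀ i j : Fin n, (i : ℕ) + 1 = j → r i * r j * r i = r j * r i * r j) :
    IsCoxeterFamily (graphGenerator r) n where
  mul_self i hi := by
    lift i to Fin n using hi
    simp [graphGenerator_val, mul_self]
  comm i j hij hj := by
    lift j to Fin n using hj
    lift i to Fin n using by omega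
    simp only [graphGenerator_val, Prod.mk_mul_mk, comm i j hij, Prod.mk.injEq, and_true]
    apply swap_mul_swap_comm <;> simp [Fin.ext_iff] <;> omega
  braid i hi := by
    obtain ⟨j, hj⟩ : ∃ j : Fin n, (j : ℕ) = i + 1 := ⟨⟨i + 1, hi⟩, rfl⟩
    lift i to Fin n using by omega
    rw [← hj]
    have hsucc : j.castSucc = i.succ := Fin.ext hj
    simp only [graphGenerator_val, Prod.mk_mul_mk, braid i j hj.symm, Prod.mk.injEq, and_true,
      hsucc]
    apply swap_mul_swap_mul_swap_comm <;> simp [Fin.ext_iff] <;> omega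

theorem exists_hom_perm_swap_castSucc_succ {M : Type*} [Monoid M] {r : Fin n → M}
    (mul_self : ∀ i, r i * r i = 1)
    (comm : ∀ i j : Fin n, (i : ℕ) + 2 ≤ j → r i * r j = r j * r i)
    (braid : ∀ i j : Fin n, (i : ℕ) + 1 = j → r i * r j * r i = r j * r i * r j) :
    ∃ f : Perm (Fin (n + 1)) →* M, ∀ i : Fin n, f (swap i.castSucc i.succ) = r i := by
  let u (i : Fin n) : Mˣ := ⟨r i, r i, mul_self i, mul_self i⟩
  have hcox : IsCoxeterFamily (graphGenerator u) n := isCoxeterFamily_graphGenerator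
    (fun i ↦ Units.ext (mul_self i)) (fun i j h ↦ Units.ext (comm i j h))
    (fun i j h ↦ Units.ext (braid i j h))
  let Γ := Subgroup.closure (graphGenerator u '' Set.Iio n)
  have mem_Γ (i : Fin n) : (swap i.castSucc i.succ, u i) ∈ Γ :=
    Subgroup.subset_closure ⟨i, i.2, graphGenerator_val u i⟩
  let toNat : Perm (Fin (n + 1)) →* Perm ℕ := Perm.extendDomainHom Fin.equivSubtype
  have hφ : ∀ i < n, (toNat.comp (MonoidHom.fst _ Mˣ)) (graphGenerator u i) = swap i (i + 1) := by
    intro i hi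
    lift i to Fin n using hi
    rw [graphGenerator_val]
    exact extendDomain_swap_castSucc_succ i
  let fst : Γ →* Perm (Fin (n + 1)) := (MonoidHom.fst _ _).comp Γ.subtype
  have fst_injective : Function.Injective fst := by
    rw [injective_iff_map_eq_one]
    rintro ⟨w, hw⟩ hw1
    have hw1 : w.1 = 1 := hw1
    exact Subtype.ext (hcox.eq_one_of_map_eq_one hφ hw (by simp [hw1]))
  have fst_surjective : Function.Surjective fst := by
    rw [← MonoidHom.mrange_eq_top, eq_top_iff, ← Perm.mclosure_swap_castSucc_succ,
      Submonoid.closure_le]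
    rintro _ ⟨i, rfl⟩
    exact ⟨⟨_, mem_Γ i⟩, rfl⟩
  let e : Γ ≃* Perm (Fin (n + 1)) := .ofBijective fst ⟨fst_injective, fst_surjective⟩
  let snd : Γ →* Mˣ := (MonoidHom.snd _ _).comp Γ.subtype
  refine ⟨(Units.coeHom M).comp (snd.comp e.symm.toMonoidHom), fun i ↦ ?_⟩
  have he : e.symm (swap i.castSucc i.succ) = ⟨_, mem_Γ i⟩ := by
    rw [MulEquiv.symm_apply_eq]; rfl
  simp [he, snd, u]

end

/-! ### Algebras generated by permutations and arcs -/

section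

variable {P : Type*}

/-- The points occurring in a list of arcs. -/
def endpoints (l : List (P × P)) : List P :=
  l.flatMap fun p ↦ [p.1, p.2]

@[simp]
lemma endpoints_nil : endpoints ([] : List (P × P)) = [] :=
  rfl

@[simp]
lemma endpoints_cons (p : P × P) (l : List (P × P)) :
    endpoints (p :: l) = p.1 :: p.2 :: endpoints l :=
  rfl

lemma length_endpoints (l : List (P × P)) : (endpoints l).length = 2 * l.length := by
  induction l with
  | nil => rfl
  | cons p l ih =>
    rw [endpoints_cons, List.length_cons, List.length_cons, ih, List.length_cons]
    ring

lemma endpoints_map (g : P → P) (l : List (P × P)) :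
    endpoints (l.map (Prod.map g g)) = (endpoints l).map g := by
  induction l with
  | nil => rfl
  | cons p l ih => simp [ih]

lemma endpoints_injective : Function.Injective (endpoints : List (P × P) → List P) := by
  intro l l' h
  induction l generalizing l' with
  | nil => cases l' <;> simp_all
  | cons p l ih =>
    cases l' with
    | nil => simp at h
    | cons p' l' =>
      simp only [endpoints_cons, List.cons.injEq] at h
      rw [Prod.ext h.1 h.2.1, ih h.2.2]

lemma mem_endpoints {l : List (P × P)} {a : P} :
    a ∈ endpoints l ↔ ∃ b, (a, b) ∈ l ∨ (b, a) ∈ l := by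
  simp only [endpoints, List.mem_flatMap, List.mem_cons, List.not_mem_nil, or_false, Prod.exists]
  grind

lemma ne_of_mem_of_nodup_endpoints {l : List (P × P)} (hl : (endpoints l).Nodup) {a b : P}
    (h : (a, b) ∈ l) : a ≠ b := by
  induction l with
  | nil => simp at h
  | cons p l ih =>
    simp only [endpoints_cons, List.nodup_cons, List.mem_cons, not_or] at hl
    obtain rfl | h := List.mem_cons.1 h
    · exact hl.1.1
    · exact ih hl.2.2 h

lemma exists_perm_map_eq {l l' : List P} (h : l.Nodup) (h' : l'.Nodup)
    (hlen : l.length = l'.length) : ∃ g : Perm P, l.map g = l' := by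
  have := Perm.isMultiplyPretransitive P l.length
  let f : Fin l.length ↪ P := ⟨l.get, List.nodup_iff_injective_get.1 h⟩
  let f' : Fin l.length ↪ P := ⟨fun i ↦ l'.get (i.cast hlen), fun i j hij ↦ by
    simpa using List.nodup_iff_injective_get.1 h' hij⟩
  obtain ⟨g, hg⟩ := MulAction.exists_smul_eq (Perm P) f f'
  refine ⟨g, List.ext_getElem (by simpa using hlen) fun i hi _ ↦ ?_⟩
  simpa [f, f'] using congr($hg ⟨i, by simpa using hi⟩)

lemma exists_perm_map_arcs_eq {l l' : List (P × P)} (h : (endpoints l).Nodup)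
    (h' : (endpoints l').Nodup) (hlen : l.length = l'.length) :
    ∃ g : Perm P, l.map (Prod.map g g) = l' := by
  obtain ⟨g, hg⟩ := exists_perm_map_eq h h' (by rw [length_endpoints, length_endpoints, hlen])
  exact ⟨g, endpoints_injective (by rw [endpoints_map, hg])⟩

end

lemma span_eq_top_of_adjoin_eq_top {R A : Type*} [CommSemiring R] [Semiring A] [Algebra R A]
    {s t : Set A} (hs : Algebra.adjoin R s = ⊤) (one : 1 ∈ Submodule.span R t)
    (mul : ∀ x ∈ s, ∀ y ∈ t, x * y ∈ Submodule.span R t) : Submodule.span R t = ⊤ := by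
  have mul_mem (x : A) : ∀ y ∈ Submodule.span R t, x * y ∈ Submodule.span R t := by
    have hx : x ∈ Algebra.adjoin R s := hs ▸ Algebra.mem_top
    induction hx using Algebra.adjoin_induction with
    | mem x hx =>
      have h : Submodule.span R t ≤ (Submodule.span R t).comap (LinearMap.mulLeft R x) :=
        Submodule.span_le.2 (mul x hx)
      exact h
    | algebraMap c =>
      intro y hy
      rw [← Algebra.smul_def]
      exact Submodule.smul_mem _ c hy
    | add x x' _ _ hx hx' =>
      intro y hy
      rw [add_mul]
      exact add_mem (hx y hy) (hx' y hy)
    | mul x x' _ _ hx hx' =>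
      intro y hy
      rw [mul_assoc]
      exact hx _ (hx' y hy)
  exact eq_top_iff.2 fun x _ ↦ mul_one x ▸ mul_mem x 1 one

/-- An action of the symmetric group of `P` on an algebra `A` by units `r g`, together with elements
`E a b` of `A`, subject to the relations of the diagrams of permutations and of the diagrams
consisting of the horizontal arcs `a – b` at the top and at the bottom in a Brauer algebra on `P`.
The values `E a a` carry no meaning. -/
structure BrauerData {K : Type*} [CommRing K] (δ : K) (P : Type*) [DecidableEq P]
    (A : Type*) [Ring A] [Algebra K A] where
  r : Perm P →* A
  E : P → P → A
  conj : ∀ g a b, r g * E a b = E (g a) (g b) * r g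
  r_swap_mul_E : ∀ a b, r (swap a b) * E a b = E a b
  E_mul_r_swap : ∀ a b, E a b * r (swap a b) = E a b
  E_mul_self : ∀ a b, E a b * E a b = δ • E a b
  E_mul_E : ∀ a b c, [a, b, c].Nodup → E a b * E b c = r (swap a c) * E b c
  E_comm : ∀ a b c d, [a, b, c, d].Nodup → E a b * E c d = E c d * E a b

namespace BrauerData

variable {K : Type*} [CommRing K] {δ : K} {P : Type*} [DecidableEq P]
    {A : Type*} [Ring A] [Algebra K A] (D : BrauerData δ P A)

/-- The elements `r g` and `E a b`, for `a ≠ b`, generate the algebra. -/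
def Generates : Prop :=
  Algebra.adjoin K (Set.range D.r ∪ {x | ∃ a b, a ≠ b ∧ D.E a b = x}) = ⊤

lemma E_symm (a b : P) : D.E a b = D.E b a := by
  have h := D.conj (swap a b) a b
  rwa [D.r_swap_mul_E, swap_apply_left, swap_apply_right, swap_comm, D.E_mul_r_swap] at h

lemma r_mul_r_inv (g : Perm P) : D.r g * D.r g⁻¹ = 1 := by
  rw [← map_mul, mul_inv_cancel, map_one]

lemma E_mul_E' {a b c : P} (h : [a, b, c].Nodup) :
    D.E a b * D.E b c = D.E a b * D.r (swap a c) := by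
  simp only [List.nodup_cons, List.mem_cons, List.not_mem_nil, or_false, not_or] at h
  rw [D.E_mul_E a b c (by grind), D.conj, swap_apply_right,
    swap_apply_of_ne_of_ne (by grind) (by grind), D.E_symm b a]

/-- The Brauer data on the opposite algebra given by the reflection of diagrams in a horizontal
line. -/
def op : BrauerData δ P Aᵐᵒᵖ where
  r := (MonoidHom.op D.r).comp (MulEquiv.inv' (Perm P)).toMonoidHom
  E a b := .op (D.E a b)
  conj g a b := MulOpposite.unop_injective <| by
    simpa using (D.conj g⁻¹ (g a) (g b)).symm
  r_swap_mul_E a b := MulOpposite.unop_injective (by simp [D.E_mul_r_swap])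
  E_mul_r_swap a b := MulOpposite.unop_injective (by simp [D.r_swap_mul_E])
  E_mul_self a b := MulOpposite.unop_injective (by simp [D.E_mul_self])
  E_mul_E a b c h := MulOpposite.unop_injective <| by
    simpa [D.E_symm, swap_comm] using D.E_mul_E' (a := c) (b := b) (c := a) (by grind)
  E_comm a b c d h := MulOpposite.unop_injective (by simpa using (D.E_comm a b c d h).symm)

lemma r_swap_mul_swap_mul_E_mul_E {a b c d : P} (h : [a, b, c, d].Nodup) :
    D.r (swap a c * swap b d) * (D.E a b * D.E c d) = D.E a b * D.E c d := by
  simp only [List.nodup_cons, List.mem_cons, List.not_mem_nil, or_false, not_or] at h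
  have hba : D.r (swap b d) * D.E a b = D.E a d * D.r (swap b d) := by
    rw [D.conj, swap_apply_left, swap_apply_of_ne_of_ne (by grind) (by grind)]
  have hbd : D.r (swap b d) * D.E c d = D.E b c * D.E c d := (D.E_mul_E b c d (by grind)).symm
  have hac : D.E a d * D.E c d = D.r (swap a c) * D.E c d := by
    rw [D.E_symm c d, D.E_mul_E a d c (by grind)]
  have hbc : D.r (swap a c) * D.E b c * D.r (swap a c) = D.E a b := by
    rw [D.conj, swap_apply_right, swap_apply_of_ne_of_ne (by grind) (by grind), mul_assoc,
      ← map_mul, swap_mul_self, map_one, mul_one, D.E_symm]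
  calc D.r (swap a c * swap b d) * (D.E a b * D.E c d)
      = D.r (swap a c) * ((D.r (swap b d) * D.E a b) * D.E c d) := by
        rw [map_mul]; simp only [mul_assoc]
    _ = D.r (swap a c) * (D.E a d * (D.r (swap b d) * D.E c d)) := by
        rw [hba]; simp only [mul_assoc]
    _ = D.r (swap a c) * ((D.E a d * D.E b c) * D.E c d) := by
        rw [hbd]; simp only [mul_assoc]
    _ = D.r (swap a c) * (D.E b c * (D.E a d * D.E c d)) := by
        rw [D.E_comm a d b c (by grind)]; simp only [mul_assoc]
    _ = (D.r (swap a c) * D.E b c * D.r (swap a c)) * D.E c d := by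
        rw [hac]; simp only [mul_assoc]
    _ = D.E a b * D.E c d := by rw [hbc]

/-- The diagram with horizontal arcs `l` at the top and at the bottom, and vertical strands through
all other points. -/
def prodE (l : List (P × P)) : A :=
  (l.map fun p ↦ D.E p.1 p.2).prod

@[simp]
lemma prodE_nil : D.prodE [] = 1 :=
  rfl

lemma prodE_cons (p : P × P) (l : List (P × P)) :
    D.prodE (p :: l) = D.E p.1 p.2 * D.prodE l := by
  simp [prodE]

lemma r_mul_prodE (g : Perm P) (l : List (P × P)) :
    D.r g * D.prodE l = D.prodE (l.map (Prod.map g g)) * D.r g := by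
  induction l with
  | nil => simp
  | cons p l ih =>
    rw [prodE_cons, ← mul_assoc, D.conj, mul_assoc, ih, List.map_cons, prodE_cons, mul_assoc,
      Prod.map_fst, Prod.map_snd]

lemma E_comm_prodE {a b : P} {l : List (P × P)} (h : (endpoints ((a, b) :: l)).Nodup) :
    D.E a b * D.prodE l = D.prodE l * D.E a b := by
  induction l with
  | nil => simp
  | cons p l ih =>
    simp only [endpoints_cons, List.nodup_cons, List.mem_cons, not_or] at h ih
    rw [prodE_cons, mul_assoc, ← ih (by grind), ← mul_assoc, D.E_comm a b p.1 p.2 (by grind),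
      mul_assoc]

lemma E_mul_prodE {a b : P} {l : List (P × P)} (hl : (endpoints l).Nodup) (hab : (a, b) ∈ l) :
    D.E a b * D.prodE l = δ • D.prodE l := by
  induction l with
  | nil => simp at hab
  | cons p l ih =>
    simp only [endpoints_cons, List.nodup_cons, List.mem_cons, not_or] at hl
    obtain rfl | h := List.mem_cons.1 hab
    · rw [prodE_cons, ← mul_assoc, D.E_mul_self, smul_mul_assoc]
    · have ha : a ∈ endpoints l := mem_endpoints.2 ⟨b, .inl h⟩
      have hb : b ∈ endpoints l := mem_endpoints.2 ⟨a, .inr h⟩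
      have hne : a ≠ b := ne_of_mem_of_nodup_endpoints hl.2.2 h
      rw [prodE_cons, ← mul_assoc, D.E_comm a b p.1 p.2 (by grind), mul_assoc, ih hl.2.2 h,
        mul_smul_comm]

lemma op_prodE {l : List (P × P)} (hl : (endpoints l).Nodup) :
    D.op.prodE l = .op (D.prodE l) := by
  induction l with
  | nil => rfl
  | cons p l ih =>
    rw [prodE_cons, prodE_cons, D.E_comm_prodE hl, MulOpposite.op_mul,
      ih (hl.sublist (by simp [List.Sublist.cons]))]
    rfl

/-- The Brauer diagrams, each written as a permutation on top of a diagram whose horizontal arcs at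
the top and at the bottom are the disjoint pairs in a list `l`. -/
def diagrams : Set A :=
  {x | ∃ g l, (endpoints l).Nodup ∧ D.r g * D.prodE l = x}

/-- The diagrams with exactly `i` arcs at the bottom, and therefore also at the top. -/
def diagramsWithArcs (i : ℕ) : Set A :=
  {x | ∃ g l, (endpoints l).Nodup ∧ l.length = i ∧ D.r g * D.prodE l = x}

section IsMorphism

variable {B : Type*} [Ring B] [Algebra K B] {D} {D' : BrauerData δ P B} {ρ : A →ₐ[K] B}

variable (D D' ρ) in
/-- The homomorphism `ρ` carries the data `D` to `D'`. -/
structure IsMorphism : Prop where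
  map_r : ∀ g, ρ (D.r g) = D'.r g
  map_E : ∀ a b, a ≠ b → ρ (D.E a b) = D'.E a b

lemma IsMorphism.map_prodE (hρ : D.IsMorphism D' ρ) {l : List (P × P)}
    (hl : (endpoints l).Nodup) : ρ (D.prodE l) = D'.prodE l := by
  rw [prodE, map_list_prod, List.map_map]
  exact congrArg List.prod (List.map_congr_left fun p hp ↦
    hρ.map_E p.1 p.2 (ne_of_mem_of_nodup_endpoints hl hp))

lemma IsMorphism.map_mem_diagramsWithArcs (hρ : D.IsMorphism D' ρ) {i : ℕ} {x : A}
    (hx : x ∈ D.diagramsWithArcs i) : ρ x ∈ D'.diagramsWithArcs i := by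
  obtain ⟨g, l, hl, hi, rfl⟩ := hx
  exact ⟨g, l, hl, hi, by rw [map_mul, hρ.map_r, hρ.map_prodE hl]⟩

lemma IsMorphism.image_diagramsWithArcs (hρ : D.IsMorphism D' ρ) (i : ℕ) :
    ρ '' D.diagramsWithArcs i = D'.diagramsWithArcs i := by
  refine Set.Subset.antisymm (Set.image_subset_iff.2 fun x hx ↦ hρ.map_mem_diagramsWithArcs hx) ?_
  rintro _ ⟨g, l, hl, hi, rfl⟩
  exact ⟨D.r g * D.prodE l, ⟨g, l, hl, hi, rfl⟩, by rw [map_mul, hρ.map_r, hρ.map_prodE hl]⟩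

end IsMorphism

section Absorb

variable (hδ : IsUnit δ) {a b c d : P} {e : A}
include hδ

lemma r_swap_mul_of_E_mul (he : D.E a b * e = δ • e) : D.r (swap a b) * e = e := by
  rw [← hδ.smul_left_cancel, ← mul_smul_comm, ← he, ← mul_assoc, D.r_swap_mul_E]

lemma r_swap_mul_swap_mul_of_E_mul (h : [a, b, c, d].Nodup) (hab : D.E a b * e = δ • e)
    (hcd : D.E c d * e = δ • e) : D.r (swap a c * swap b d) * e = e := by
  have hE : D.E a b * D.E c d * e = (δ * δ) • e := by
    rw [mul_assoc, hcd, mul_smul_comm, hab, smul_smul]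
  rw [← (hδ.mul hδ).smul_left_cancel, ← mul_smul_comm, ← hE, ← mul_assoc,
    D.r_swap_mul_swap_mul_E_mul_E h]

lemma E_mul_of_E_mul (h : [a, b, c].Nodup) (hac : D.E a c * e = δ • e) :
    D.E a b * e = D.r (swap b c) * e := by
  rw [← hδ.smul_left_cancel, ← mul_smul_comm, ← hac, ← mul_assoc, D.E_symm a b,
    D.E_mul_E b a c (by grind), mul_assoc, hac, mul_smul_comm]

omit hδ in
lemma exists_E_mul_prodE_of_mem {l : List (P × P)} (hl : (endpoints l).Nodup)
    (ha : a ∈ endpoints l) : ∃ c, a ≠ c ∧ D.E a c * D.prodE l = δ • D.prodE l := by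
  obtain ⟨c, h | h⟩ := mem_endpoints.1 ha
  · exact ⟨c, ne_of_mem_of_nodup_endpoints hl h, D.E_mul_prodE hl h⟩
  · exact ⟨c, (ne_of_mem_of_nodup_endpoints hl h).symm, by rw [D.E_symm, D.E_mul_prodE hl h]⟩

lemma exists_E_mul_prodE_eq_smul {l : List (P × P)} (hl : (endpoints l).Nodup) (hab : a ≠ b)
    (ha : a ∈ endpoints l) :
    ∃ (s : K) (g : Perm P), D.E a b * D.prodE l = s • (D.r g * D.prodE l) := by
  obtain ⟨c, hac, h⟩ := D.exists_E_mul_prodE_of_mem hl ha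
  obtain rfl | hbc := eq_or_ne b c
  · exact ⟨δ, 1, by rw [h, map_one, one_mul]⟩
  · exact ⟨1, swap b c, by rw [one_smul, D.E_mul_of_E_mul hδ (by grind) h]⟩

lemma E_mul_prodE_mem_span {l : List (P × P)} (hl : (endpoints l).Nodup) (hab : a ≠ b) :
    D.E a b * D.prodE l ∈ Submodule.span K D.diagrams := by
  have of_smul (h : ∃ (s : K) (g : Perm P), D.E a b * D.prodE l = s • (D.r g * D.prodE l)) :
      D.E a b * D.prodE l ∈ Submodule.span K D.diagrams := by
    obtain ⟨s, g, h⟩ := h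
    exact h ▸ Submodule.smul_mem _ s (Submodule.subset_span ⟨g, l, hl, rfl⟩)
  by_cases ha : a ∈ endpoints l
  · exact of_smul (D.exists_E_mul_prodE_eq_smul hδ hl hab ha)
  by_cases hb : b ∈ endpoints l
  · exact of_smul (D.E_symm a b ▸ D.exists_E_mul_prodE_eq_smul hδ hl hab.symm hb)
  · refine Submodule.subset_span ⟨1, (a, b) :: l, ?_, by rw [map_one, one_mul, prodE_cons]⟩
    simp [hab, ha, hb, hl]

omit hδ in
lemma r_mul_mem_span_diagrams (g : Perm P) {x : A} (hx : x ∈ Submodule.span K D.diagrams) :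
    D.r g * x ∈ Submodule.span K D.diagrams := by
  have h : Submodule.span K D.diagrams ≤
      (Submodule.span K D.diagrams).comap (LinearMap.mulLeft K (D.r g)) := by
    refine Submodule.span_le.2 ?_
    rintro _ ⟨g', l, hl, rfl⟩
    exact Submodule.subset_span ⟨g * g', l, hl, by rw [map_mul, mul_assoc, LinearMap.mulLeft_apply]⟩
  exact h hx

theorem span_diagrams (hD : D.Generates) : Submodule.span K D.diagrams = ⊤ := by
  refine span_eq_top_of_adjoin_eq_top hD (Submodule.subset_span ⟨1, [], by simp, by simp⟩) ?_
  rintro _ (⟨g, rfl⟩ | ⟨a, b, hab, rfl⟩) _ ⟨g', l, hl, rfl⟩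
  · exact Submodule.subset_span ⟨g * g', l, hl, by rw [map_mul, mul_assoc]⟩
  · have h : D.E a b * D.r g' = D.r g' * D.E (g'⁻¹ a) (g'⁻¹ b) := by
      simp [D.conj]
    rw [← mul_assoc, h, mul_assoc]
    exact D.r_mul_mem_span_diagrams g' (D.E_mul_prodE_mem_span hδ hl (by simpa using hab))

end Absorb

end BrauerData

/-! ### The Brauer algebra of type `A` -/

namespace BrauerAlgebra

section

variable {n : ℕ} {Q : SimpleGraph (Fin n)} {K : Type*} [CommRing K] {δ : K} {i j : Fin n}

/-- The generator `R_i` of the Brauer algebra. -/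
def R (i : Fin n) : BrauerAlgebra n Q K δ :=
  RingQuot.mkAlgHom K _ (FreeAlgebra.ι K (.inl i))

/-- The generator `E_i` of the Brauer algebra. -/
def E (i : Fin n) : BrauerAlgebra n Q K δ :=
  RingQuot.mkAlgHom K _ (FreeAlgebra.ι K (.inr i))

lemma R_mul_self : (R i * R i : BrauerAlgebra n Q K δ) = 1 := by
  simpa [R] using RingQuot.mkAlgHom_rel K (BrauerRel.rsq (Q := Q) (δ := δ) i)

lemma R_mul_E : (R i * E i : BrauerAlgebra n Q K δ) = E i := by
  simpa [R, E] using RingQuot.mkAlgHom_rel K (BrauerRel.re (Q := Q) (δ := δ) i)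

lemma E_mul_R : (E i * R i : BrauerAlgebra n Q K δ) = E i := by
  simpa [R, E] using RingQuot.mkAlgHom_rel K (BrauerRel.er (Q := Q) (δ := δ) i)

lemma E_mul_self : (E i * E i : BrauerAlgebra n Q K δ) = δ • E i := by
  simpa [E] using RingQuot.mkAlgHom_rel K (BrauerRel.esq (Q := Q) (δ := δ) i)

lemma R_comm (hne : i ≠ j) (hij : ¬Q.Adj i j) :
    (R i * R j : BrauerAlgebra n Q K δ) = R j * R i := by
  simpa [R] using RingQuot.mkAlgHom_rel K (BrauerRel.rr (δ := δ) i j hne hij)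

lemma E_mul_R_comm (hne : i ≠ j) (hij : ¬Q.Adj i j) :
    (E i * R j : BrauerAlgebra n Q K δ) = R j * E i := by
  simpa [R, E] using RingQuot.mkAlgHom_rel K (BrauerRel.erc (δ := δ) i j hne hij)

lemma E_comm (hne : i ≠ j) (hij : ¬Q.Adj i j) :
    (E i * E j : BrauerAlgebra n Q K δ) = E j * E i := by
  simpa [E] using RingQuot.mkAlgHom_rel K (BrauerRel.ee (δ := δ) i j hne hij)

lemma R_braid (hij : Q.Adj i j) :
    (R i * R j * R i : BrauerAlgebra n Q K δ) = R j * R i * R j := by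
  simpa [R] using RingQuot.mkAlgHom_rel K (BrauerRel.braid (δ := δ) i j hij)

lemma R_mul_R_mul_E (hij : Q.Adj i j) :
    (R j * R i * E j : BrauerAlgebra n Q K δ) = E i * E j := by
  simpa [R, E] using RingQuot.mkAlgHom_rel K (BrauerRel.rre (δ := δ) i j hij)

lemma R_mul_E_mul_R (hij : Q.Adj i j) :
    (R i * E j * R i : BrauerAlgebra n Q K δ) = R j * E i * R j := by
  simpa [R, E] using RingQuot.mkAlgHom_rel K (BrauerRel.rer (δ := δ) i j hij)

lemma adjoin_range_R_union_range_E :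
    Algebra.adjoin K (Set.range R ∪ Set.range E : Set (BrauerAlgebra n Q K δ)) = ⊤ := by
  have h : (Set.range R ∪ Set.range E : Set (BrauerAlgebra n Q K δ)) =
      RingQuot.mkAlgHom K (BrauerRel n Q K δ) '' Set.range (FreeAlgebra.ι K) := by
    ext
    simp [R, E, or_and_right, exists_or]
  rw [h, ← AlgHom.map_adjoin, FreeAlgebra.adjoin_range_ι, Algebra.map_top,
    AlgHom.range_eq_top]
  exact RingQuot.mkAlgHom_surjective K _

lemma typeA_adj : (typeA n).Adj i j ↔ (i : ℕ) + 1 = j ∨ (j : ℕ) + 1 = i := by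
  rw [typeA, SimpleGraph.fromRel_adj, and_iff_right_of_imp]
  rintro h rfl
  omega

end

end BrauerAlgebra

section PairConj

variable {P A : Type*} [Ring A] (r : Perm P →* A)

lemma conj_mul_conj (g : Perm P) (x y : A) :
    r g * x * r g⁻¹ * (r g * y * r g⁻¹) = r g * (x * y) * r g⁻¹ := by
  have h : r g⁻¹ * r g = 1 := by rw [← map_mul, inv_mul_cancel, map_one]
  calc r g * x * r g⁻¹ * (r g * y * r g⁻¹) = r g * x * (r g⁻¹ * r g) * y * r g⁻¹ := by noncomm_ring
    _ = r g * (x * y) * r g⁻¹ := by rw [h]; noncomm_ring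

lemma map_swap_apply_apply [DecidableEq P] (g : Perm P) (a b : P) :
    r (swap (g a) (g b)) = r g * r (swap a b) * r g⁻¹ := by
  rw [swap_apply_apply, map_mul, map_mul]

open Classical in
/-- The conjugate `r g * e * r g⁻¹` of `e` for some permutation `g` with `g p = a` and `g q = b`,
and `0` if there is no such `g`. It is independent of `g` if `e` commutes with the permutations
fixing `p` and `q`. -/
noncomputable def pairConj (p q : P) (e : A) (a b : P) : A :=
  if h : ∃ g : Perm P, g p = a ∧ g q = b then r h.choose * e * r h.choose⁻¹ else 0

variable {r} {p q : P} {e : A} (comm : ∀ σ : Perm P, σ p = p → σ q = q → r σ * e = e * r σ)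
include comm

lemma pairConj_apply_apply (g : Perm P) : pairConj r p q e (g p) (g q) = r g * e * r g⁻¹ := by
  have hex : ∃ g' : Perm P, g' p = g p ∧ g' q = g q := ⟨g, rfl, rfl⟩
  set g' := hex.choose
  have h : r (g⁻¹ * g') * e = e * r (g⁻¹ * g') :=
    comm _ (by simp [g', hex.choose_spec.1]) (by simp [g', hex.choose_spec.2])
  calc pairConj r p q e (g p) (g q) = r (g * (g⁻¹ * g')) * e * r g'⁻¹ := by
        rw [pairConj, dif_pos hex, mul_inv_cancel_left]
    _ = r g * e * (r (g⁻¹ * g') * r g'⁻¹) := by rw [map_mul, mul_assoc (r g), h]; noncomm_ring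
    _ = r g * e * r g⁻¹ := by rw [← map_mul, mul_inv_cancel_right]

lemma mul_pairConj (g : Perm P) (a b : P) :
    r g * pairConj r p q e a b = pairConj r p q e (g a) (g b) * r g := by
  by_cases hab : ∃ g' : Perm P, g' p = a ∧ g' q = b
  · obtain ⟨g', rfl, rfl⟩ := hab
    rw [pairConj_apply_apply comm, ← Perm.mul_apply, ← Perm.mul_apply, pairConj_apply_apply comm,
      mul_inv_rev, map_mul, map_mul]
    have h : r g⁻¹ * r g = 1 := by rw [← map_mul, inv_mul_cancel, map_one]
    simp only [mul_assoc, h, mul_one]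
  · have hgab : ¬∃ g' : Perm P, g' p = g a ∧ g' q = g b := by
      rintro ⟨g', ha, hb⟩
      exact hab ⟨g⁻¹ * g', by simp [ha], by simp [hb]⟩
    rw [pairConj, dif_neg hab, pairConj, dif_neg hgab, mul_zero, zero_mul]

lemma pairConj_map (g : Perm P) (a b : P) :
    pairConj r p q e (g a) (g b) = r g * pairConj r p q e a b * r g⁻¹ := by
  rw [mul_pairConj comm, mul_assoc, ← map_mul, mul_inv_cancel, map_one, mul_one]

end PairConj

lemma mem_closure_swap_of_fix {n k : ℕ} {σ : Perm (Fin (n + 1))}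
    (hσ : ∀ j : Fin (n + 1), (j : ℕ) < k → σ j = j) :
    σ ∈ Subgroup.closure {g | ∃ i : Fin n, k ≤ (i : ℕ) ∧ swap i.castSucc i.succ = g} := by
  have isSwap : ∀ g ∈ {g | ∃ i : Fin n, k ≤ (i : ℕ) ∧ swap i.castSucc i.succ = g}, g.IsSwap := by
    rintro _ ⟨i, -, rfl⟩
    exact ⟨_, _, Fin.castSucc_lt_succ.ne, rfl⟩
  have mem_orbit (x y : Fin (n + 1)) (hx : k ≤ x) (hxy : x ≤ y) : y ∈ MulAction.orbit
      (Subgroup.closure {g | ∃ i : Fin n, k ≤ (i : ℕ) ∧ swap i.castSucc i.succ = g}) x := by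
    induction y using Fin.induction with
    | zero => rw [Fin.le_zero_iff.1 hxy]; exact MulAction.mem_orbit_self _
    | succ i ih =>
      obtain rfl | hlt := hxy.eq_or_lt
      · exact MulAction.mem_orbit_self _
      · have hxi : x ≤ i.castSucc := Fin.le_castSucc_iff.2 hlt
        have hmem := Subgroup.subset_closure (k := {g | ∃ i : Fin n, k ≤ (i : ℕ) ∧
          swap i.castSucc i.succ = g}) ⟨i, hx.trans hxi, rfl⟩
        rw [← MulAction.orbit_eq_iff.2 (ih hxi)]
        exact ⟨⟨_, hmem⟩, swap_apply_left _ _⟩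
  refine (mem_closure_isSwap isSwap).2 ⟨Set.toFinite _, fun x ↦ ?_⟩
  by_cases hx : (x : ℕ) < k
  · rw [hσ x hx]
    exact MulAction.mem_orbit_self _
  have hσx : ¬(σ x : ℕ) < k := fun h ↦ hx (by rwa [σ.injective (hσ _ h)] at h)
  obtain h | h := le_total x (σ x)
  · exact mem_orbit _ _ (not_lt.1 hx) h
  · exact MulAction.mem_orbit_symm.1 (mem_orbit _ _ (not_lt.1 hσx) h)

namespace BrauerAlgebra

variable {n : ℕ} {K : Type*} [CommRing K] {δ : K}

lemma exists_hom_perm : ∃ r : Perm (Fin (n + 1)) →* BrauerAlgebra n (typeA n) K δ,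
    ∀ i : Fin n, r (swap i.castSucc i.succ) = R i :=
  exists_hom_perm_swap_castSucc_succ (fun _ ↦ R_mul_self)
    (fun _ _ h ↦ R_comm (by grind) (by rw [typeA_adj]; omega))
    (fun _ _ h ↦ R_braid (typeA_adj.2 (.inl h)))

section

variable {r : Perm (Fin (n + 2)) →* BrauerAlgebra (n + 1) (typeA (n + 1)) K δ}

lemma exists_perm_zero_one {a b : Fin (n + 2)} (hab : a ≠ b) :
    ∃ g : Perm (Fin (n + 2)), g 0 = a ∧ g 1 = b := by
  simpa using exists_perm_map_eq (l := [0, 1]) (l' := [a, b]) (by simp) (by simpa) rfl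

lemma pairConj_self (a : Fin (n + 2)) : pairConj r 0 1 (E 0) a a = 0 := by
  refine dif_neg ?_
  rintro ⟨g, h0, h1⟩
  exact absurd (g.injective (h0.trans h1.symm)) (by simp)

variable (hr : ∀ i : Fin (n + 1), r (swap i.castSucc i.succ) = R i)
include hr

lemma r_mul_E_zero (σ : Perm (Fin (n + 2))) (h0 : σ 0 = 0) (h1 : σ 1 = 1) :
    r σ * E 0 = E 0 * r σ := by
  have hσ := mem_closure_swap_of_fix (n := n + 1) (k := 2) (σ := σ) fun j hj ↦ by
    obtain rfl | rfl : j = 0 ∨ j = 1 := by simp only [Fin.ext_iff, Fin.val_zero, Fin.val_one]; omega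
    exacts [h0, h1]
  rw [← Subgroup.mem_toSubmonoid, Subgroup.closure_toSubmonoid_of_finite] at hσ
  clear h0 h1
  induction hσ using Submonoid.closure_induction with
  | mem _ h =>
    obtain ⟨i, hi, rfl⟩ := h
    have hadj : ¬(typeA (n + 1)).Adj 0 i := by rw [typeA_adj, Fin.val_zero]; omega
    rw [hr, E_mul_R_comm (by grind) hadj]
  | one => simp
  | mul g g' _ _ hg hg' => rw [map_mul, mul_assoc, hg', ← mul_assoc, hg, mul_assoc]

lemma pairConj_castSucc_succ (i : Fin (n + 1)) :
    pairConj r 0 1 (E 0) i.castSucc i.succ = E i := by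
  induction i using Fin.induction with
  | zero => simpa using pairConj_apply_apply (r_mul_E_zero hr) 1
  | succ i ih =>
    generalize ha : i.castSucc.castSucc = a at ih
    generalize hb : i.castSucc.succ = b at ih
    have hb' : i.succ.castSucc = b := by rw [← hb, Fin.succ_castSucc]
    have hab : r (swap a b) = R i.castSucc := by rw [← ha, ← hb, hr]
    have hbc : r (swap b i.succ.succ) = R i.succ := by rw [← hb', hr]
    have hne : [a, b, i.succ.succ].Nodup := by
      simp [← ha, ← hb', Fin.ext_iff, Nat.add_assoc]
    have hadj : (typeA (n + 1)).Adj i.castSucc i.succ := typeA_adj.2 (.inl rfl)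
    have ha' : (swap a b * swap b i.succ.succ) a = b := by grind [Perm.mul_apply]
    have hb'' : (swap a b * swap b i.succ.succ) b = i.succ.succ := by grind [Perm.mul_apply]
    have hconj := pairConj_map (r_mul_E_zero hr) (swap a b * swap b i.succ.succ) a b
    rw [ha', hb'', ih, mul_inv_rev, swap_inv, swap_inv, map_mul, map_mul, hab, hbc] at hconj
    rw [hb', hconj]
    calc R i.castSucc * R i.succ * E i.castSucc * (R i.succ * R i.castSucc)
        = R i.castSucc * (R i.succ * E i.castSucc * R i.succ) * R i.castSucc := by noncomm_ring
      _ = (R i.castSucc * R i.castSucc) * E i.succ * (R i.castSucc * R i.castSucc) := by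
        rw [← R_mul_E_mul_R hadj]; noncomm_ring
      _ = E i.succ := by rw [R_mul_self, one_mul, mul_one]

lemma r_swap_mul_pairConj (a b : Fin (n + 2)) :
    r (swap a b) * pairConj r 0 1 (E 0) a b = pairConj r 0 1 (E 0) a b := by
  obtain rfl | hab := eq_or_ne a b
  · rw [pairConj_self, mul_zero]
  obtain ⟨g, rfl, rfl⟩ := exists_perm_zero_one hab
  have h : r (swap 0 1) = R 0 := hr 0
  rw [pairConj_apply_apply (r_mul_E_zero hr), map_swap_apply_apply, conj_mul_conj, h, R_mul_E]

lemma pairConj_mul_r_swap (a b : Fin (n + 2)) :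
    pairConj r 0 1 (E 0) a b * r (swap a b) = pairConj r 0 1 (E 0) a b := by
  obtain rfl | hab := eq_or_ne a b
  · rw [pairConj_self, zero_mul]
  obtain ⟨g, rfl, rfl⟩ := exists_perm_zero_one hab
  have h : r (swap 0 1) = R 0 := hr 0
  rw [pairConj_apply_apply (r_mul_E_zero hr), map_swap_apply_apply, conj_mul_conj, h, E_mul_R]

lemma pairConj_mul_self (a b : Fin (n + 2)) :
    pairConj r 0 1 (E 0) a b * pairConj r 0 1 (E 0) a b = δ • pairConj r 0 1 (E 0) a b := by
  obtain rfl | hab := eq_or_ne a b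
  · rw [pairConj_self, zero_mul, smul_zero]
  obtain ⟨g, rfl, rfl⟩ := exists_perm_zero_one hab
  rw [pairConj_apply_apply (r_mul_E_zero hr), conj_mul_conj, E_mul_self, mul_smul_comm,
    smul_mul_assoc]

lemma pairConj_mul_pairConj {a b c : Fin (n + 2)} (h : [a, b, c].Nodup) :
    pairConj r 0 1 (E 0) a b * pairConj r 0 1 (E 0) b c =
      r (swap a c) * pairConj r 0 1 (E 0) b c := by
  obtain ⟨n, rfl⟩ : ∃ m, n = m + 1 := by
    cases n with
    | zero => simpa using h.length_le_card
    | succ m => exact ⟨m, rfl⟩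
  have hnodup : [(0 : Fin (n + 1 + 2)), 1, Fin.succ 1].Nodup := by
    simp [Fin.ext_iff, Nat.mod_eq_of_lt]
  obtain ⟨g, hg⟩ := exists_perm_map_eq hnodup h rfl
  simp only [List.map_cons, List.map_nil, List.cons.injEq, and_true] at hg
  obtain ⟨rfl, rfl, rfl⟩ := hg
  have h01 : pairConj r 0 1 (E 0) 0 1 = E 0 := pairConj_castSucc_succ hr 0
  have h12 : pairConj r 0 1 (E 0) 1 (Fin.succ 1) = E 1 := pairConj_castSucc_succ hr 1
  have r01 : r (swap 0 1) = R 0 := hr 0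
  have r12 : r (swap 1 (Fin.succ 1)) = R 1 := hr 1
  have hswap : swap (0 : Fin (n + 1 + 2)) (Fin.succ 1) =
      swap 1 (Fin.succ 1) * swap 0 1 * swap 1 (Fin.succ 1) := by
    grind [Perm.mul_apply]
  have hadj : (typeA (n + 1 + 1)).Adj 0 1 := typeA_adj.2 (.inl rfl)
  simp only [pairConj_map (r_mul_E_zero hr), map_swap_apply_apply, conj_mul_conj]
  rw [h01, h12, hswap, map_mul, map_mul, r01, r12, mul_assoc _ (R 1) (E 1), R_mul_E,
    R_mul_R_mul_E hadj]

lemma pairConj_comm {a b c d : Fin (n + 2)} (h : [a, b, c, d].Nodup) :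
    pairConj r 0 1 (E 0) a b * pairConj r 0 1 (E 0) c d =
      pairConj r 0 1 (E 0) c d * pairConj r 0 1 (E 0) a b := by
  obtain ⟨n, rfl⟩ : ∃ m, n = m + 2 := by
    have := h.length_le_card
    simp only [List.length_cons, List.length_nil, Fintype.card_fin] at this
    exact ⟨n - 2, by omega⟩
  have hnodup : [(0 : Fin (n + 2 + 2)), 1, Fin.castSucc 2, Fin.succ 2].Nodup := by
    simp [Fin.ext_iff, Nat.mod_eq_of_lt]
  obtain ⟨g, hg⟩ := exists_perm_map_eq hnodup h rfl
  simp only [List.map_cons, List.map_nil, List.cons.injEq, and_true] at hg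
  obtain ⟨rfl, rfl, rfl, rfl⟩ := hg
  have h01 : pairConj r 0 1 (E 0) 0 1 = E 0 := pairConj_castSucc_succ hr 0
  have h23 : pairConj r 0 1 (E 0) (Fin.castSucc 2) (Fin.succ 2) = E 2 :=
    pairConj_castSucc_succ hr 2
  have hadj : ¬(typeA (n + 2 + 1)).Adj 0 2 := by
    simp [typeA_adj, Nat.mod_eq_of_lt]
  simp only [pairConj_map (r_mul_E_zero hr), conj_mul_conj]
  rw [h01, h23, E_comm (by simp [Fin.ext_iff, Nat.mod_eq_of_lt]) hadj]

end

lemma exists_brauerData_eq : ∃ D : BrauerData δ (Fin (n + 1)) (BrauerAlgebra n (typeA n) K δ),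
    (∀ i : Fin n, D.r (swap i.castSucc i.succ) = R i) ∧
      ∀ i : Fin n, D.E i.castSucc i.succ = E i := by
  cases n with
  | zero =>
    exact ⟨⟨1, fun _ _ ↦ 0, by simp, by simp, by simp, by simp, by simp, by simp⟩, nofun, nofun⟩
  | succ n =>
    obtain ⟨r, hr⟩ := exists_hom_perm (n := n + 1) (δ := δ)
    exact ⟨⟨r, pairConj r 0 1 (E 0), mul_pairConj (r_mul_E_zero hr), r_swap_mul_pairConj hr,
      pairConj_mul_r_swap hr, pairConj_mul_self hr, fun _ _ _ ↦ pairConj_mul_pairConj hr,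
      fun _ _ _ _ ↦ pairConj_comm hr⟩, hr, pairConj_castSucc_succ hr⟩

lemma generates_of_eq {D : BrauerData δ (Fin (n + 1)) (BrauerAlgebra n (typeA n) K δ)}
    (hr : ∀ i : Fin n, D.r (swap i.castSucc i.succ) = R i)
    (hE : ∀ i : Fin n, D.E i.castSucc i.succ = E i) : D.Generates := by
  refine eq_top_iff.2 (adjoin_range_R_union_range_E.ge.trans (Algebra.adjoin_mono ?_))
  refine Set.union_subset_union ?_ ?_
  · rintro _ ⟨i, rfl⟩
    exact ⟨_, hr i⟩
  · rintro _ ⟨i, rfl⟩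
    exact ⟨_, _, Fin.castSucc_lt_succ.ne, hE i⟩

section Lift

variable {B : Type*} [Ring B] [Algebra K B] (D : BrauerData δ (Fin (n + 1)) B) {i j : Fin n}

lemma nodup_of_not_adj (hne : i ≠ j) (hij : ¬(typeA n).Adj i j) :
    [i.castSucc, i.succ, j.castSucc, j.succ].Nodup := by
  rw [typeA_adj] at hij
  simp [Fin.ext_iff] at hne ⊢
  omega

lemma exists_of_adj (hij : (typeA n).Adj i j) : ∃ a b c : Fin (n + 1), [a, b, c].Nodup ∧
    swap i.castSucc i.succ = swap a b ∧ D.E i.castSucc i.succ = D.E a b ∧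
      swap j.castSucc j.succ = swap b c ∧ D.E j.castSucc j.succ = D.E b c := by
  obtain h | h := typeA_adj.1 hij
  · have hji : j.castSucc = i.succ := by simp [Fin.ext_iff, h]
    refine ⟨i.castSucc, i.succ, j.succ, ?_, rfl, rfl, by rw [hji], by rw [hji]⟩
    simp [Fin.ext_iff]
    omega
  · have hji : j.succ = i.castSucc := by simp [Fin.ext_iff, h]
    refine ⟨i.succ, i.castSucc, j.castSucc, ?_, swap_comm _ _, D.E_symm _ _, ?_, ?_⟩
    · simp [Fin.ext_iff]
      omega
    · rw [hji, swap_comm]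
    · rw [hji, D.E_symm]

/-- The images of the generators `R_i` and `E_i` under the homomorphism given by `D`. -/
def generatorImage : Fin n ⊕ Fin n → B :=
  Sum.elim (fun i ↦ D.r (swap i.castSucc i.succ)) fun i ↦ D.E i.castSucc i.succ

lemma lift_generatorImage_eq {x y : FreeAlgebra K (Fin n ⊕ Fin n)}
    (h : BrauerRel n (typeA n) K δ x y) :
    FreeAlgebra.lift K (generatorImage D) x = FreeAlgebra.lift K (generatorImage D) y := by
  induction h with simp only [map_mul, map_one, map_smul, FreeAlgebra.lift_ι_apply, generatorImage,
    Sum.elim_inl, Sum.elim_inr]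
  | rsq i => rw [← map_mul, swap_mul_self, map_one]
  | re i => rw [D.r_swap_mul_E]
  | er i => rw [D.E_mul_r_swap]
  | esq i => rw [D.E_mul_self]
  | rr i j hne hij =>
    have h := nodup_of_not_adj hne hij
    rw [← map_mul, ← map_mul, swap_mul_swap_comm] <;> grind
  | erc i j hne hij =>
    have h := nodup_of_not_adj hne hij
    rw [D.conj, swap_apply_of_ne_of_ne, swap_apply_of_ne_of_ne] <;> grind
  | ee i j hne hij => rw [D.E_comm _ _ _ _ (nodup_of_not_adj hne hij)]
  | braid i j hij =>
    obtain ⟨a, b, c, h, hi, -, hj, -⟩ := exists_of_adj D hij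
    rw [hi, hj, ← map_mul, ← map_mul, ← map_mul, ← map_mul, swap_mul_swap_mul_swap_comm] <;> grind
  | rre i j hij =>
    obtain ⟨a, b, c, h, hi, hiE, hj, hjE⟩ := exists_of_adj D hij
    have hswap : swap b c * swap a b * swap b c = swap a c := by grind [Perm.mul_apply]
    rw [hi, hj, hiE, hjE, D.E_mul_E a b c h, ← hswap, map_mul, map_mul,
      mul_assoc _ (D.r (swap b c)), D.r_swap_mul_E]
  | rer i j hij =>
    obtain ⟨a, b, c, h, hi, hiE, hj, hjE⟩ := exists_of_adj D hij
    simp only [List.nodup_cons, List.mem_cons, List.not_mem_nil, or_false, not_or] at h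
    rw [hi, hj, hiE, hjE, D.conj, D.conj, swap_apply_right, swap_apply_left,
      swap_apply_of_ne_of_ne (by grind) (by grind), swap_apply_of_ne_of_ne (by grind) (by grind),
      mul_assoc, mul_assoc, ← map_mul, ← map_mul, swap_mul_self, swap_mul_self]

lemma exists_lift : ∃ ρ : BrauerAlgebra n (typeA n) K δ →ₐ[K] B,
    (∀ i : Fin n, ρ (R i) = D.r (swap i.castSucc i.succ)) ∧
      ∀ i : Fin n, ρ (E i) = D.E i.castSucc i.succ :=
  ⟨RingQuot.liftAlgHom K
    ⟨FreeAlgebra.lift K (generatorImage D), fun _ _ ↦ lift_generatorImage_eq D⟩,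
    fun i ↦ by simp [R, generatorImage], fun i ↦ by simp [E, generatorImage]⟩

end Lift

end BrauerAlgebra

lemma BrauerData.isMorphism_of_eq {n : ℕ} {K : Type*} [CommRing K] {δ : K} {A B : Type*} [Ring A]
    [Algebra K A] [Ring B] [Algebra K B] {D : BrauerData δ (Fin (n + 1)) A}
    {D' : BrauerData δ (Fin (n + 1)) B} {ρ : A →ₐ[K] B}
    (hr : ∀ i : Fin n, ρ (D.r (swap i.castSucc i.succ)) = D'.r (swap i.castSucc i.succ))
    (hE : ∀ i : Fin n, ρ (D.E i.castSucc i.succ) = D'.E i.castSucc i.succ) :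
    D.IsMorphism D' ρ := by
  have h : (ρ : A →* B).comp D.r = D'.r := by
    refine MonoidHom.eq_of_eqOn_denseM (Perm.mclosure_swap_castSucc_succ n) ?_
    rintro _ ⟨i, rfl⟩
    exact hr i
  replace h (g : Perm (Fin (n + 1))) : ρ (D.r g) = D'.r g := congr($h g)
  refine ⟨h, fun a b hab ↦ ?_⟩
  obtain _ | m := n
  · exact absurd (Subsingleton.elim (α := Fin 1) a b) hab
  obtain ⟨g, rfl, rfl⟩ := BrauerAlgebra.exists_perm_zero_one hab
  have h01 : ρ (D.E 0 1) = D'.E 0 1 := hE 0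
  rw [← mul_one (D.E _ _), ← D.r_mul_r_inv g, ← mul_assoc, ← D.conj, map_mul, map_mul, h, h, h01,
    D'.conj, mul_assoc, D'.r_mul_r_inv, mul_one]

lemma BrauerAlgebra.exists_isMorphism {n : ℕ} {K : Type*} [CommRing K] {δ : K} {B : Type*} [Ring B]
    [Algebra K B] {D : BrauerData δ (Fin (n + 1)) (BrauerAlgebra n (typeA n) K δ)}
    (hr : ∀ i : Fin n, D.r (swap i.castSucc i.succ) = R i)
    (hE : ∀ i : Fin n, D.E i.castSucc i.succ = E i) (D' : BrauerData δ (Fin (n + 1)) B) :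
    ∃ ρ, D.IsMorphism D' ρ := by
  obtain ⟨ρ, hρr, hρE⟩ := exists_lift D'
  exact ⟨ρ, BrauerData.isMorphism_of_eq (fun i ↦ by rw [hr, hρr]) fun i ↦ by rw [hE, hρE]⟩

/-! ### Half diagrams -/

/-- The upper halves of Brauer diagrams on the points `P` whose vertical strands are labelled by
`M`: `partner a = inl b` means that `a` and `b` are joined by a horizontal arc, and
`partner a = inr t` that `a` is the upper end of the vertical strand with label `t`. -/
@[ext]
structure HalfDiagram (P M : Type*) where
  partner : P → P ⊕ M
  partner_symm : ∀ {a b}, partner a = .inl b → partner b = .inl a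
  partner_ne : ∀ a, partner a ≠ .inl a
  existsUnique_partner_eq : ∀ t, ∃! a, partner a = .inr t

namespace HalfDiagram

variable {P M : Type*}

instance [Finite P] [Finite M] : Finite (HalfDiagram P M) :=
  Finite.of_injective partner fun _ _ ↦ HalfDiagram.ext

/-- The half diagram obtained by transporting the points along `g` and the labels along `m`. -/
def relabel {P' M' : Type*} (g : P ≃ P') (m : M ≃ M') (x : HalfDiagram P M) :
    HalfDiagram P' M' where
  partner a := sumCongr g m (x.partner (g.symm a))
  partner_symm h := by
    rw [← eq_symm_apply] at h ⊢
    exact x.partner_symm h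
  partner_ne a h := x.partner_ne (g.symm a) ((eq_symm_apply _).2 h)
  existsUnique_partner_eq t := by
    simp_rw [← eq_symm_apply]
    exact (g.symm.bijective.existsUnique_iff).1 (x.existsUnique_partner_eq (m.symm t))

instance : MulAction (Perm P) (HalfDiagram P M) where
  smul g := relabel g (Equiv.refl M)
  one_smul _ := HalfDiagram.ext (funext fun _ ↦ congr($Sum.map_id_id _))
  mul_smul g h _ := HalfDiagram.ext (funext fun _ ↦ (Sum.map_map g id h id _).symm)

instance : MulAction (Perm M) (HalfDiagram P M) where
  smul := relabel (Equiv.refl P)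
  one_smul _ := HalfDiagram.ext (funext fun _ ↦ congr($Sum.map_id_id _))
  mul_smul m m' _ := HalfDiagram.ext (funext fun _ ↦ (Sum.map_map id m id m' _).symm)

lemma partner_perm_smul (g : Perm P) (x : HalfDiagram P M) (a : P) :
    (g • x).partner a = (x.partner (g⁻¹ a)).map g id :=
  rfl

lemma perm_smul_eq_iff {x y : HalfDiagram P M} {g : Perm P} :
    g • x = y ↔ ∀ w, y.partner (g w) = (x.partner w).map g id := by
  rw [HalfDiagram.ext_iff, funext_iff, g.surjective.forall]
  simp [partner_perm_smul, eq_comm]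

lemma partner_label_smul (m : Perm M) (x : HalfDiagram P M) (a : P) :
    (m • x).partner a = (x.partner a).map id m :=
  rfl

instance : SMulCommClass (Perm M) (Perm P) (HalfDiagram P M) where
  smul_comm m g x := by
    ext a : 2
    simp [partner_perm_smul, partner_label_smul]

/-- The point at the end of the vertical strand with label `t`. -/
noncomputable def freeEnd (x : HalfDiagram P M) (t : M) : P :=
  (x.existsUnique_partner_eq t).choose

lemma partner_freeEnd (x : HalfDiagram P M) (t : M) : x.partner (x.freeEnd t) = .inr t :=
  (x.existsUnique_partner_eq t).choose_spec.1

lemma eq_freeEnd {x : HalfDiagram P M} {a : P} {t : M} (h : x.partner a = .inr t) :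
    a = x.freeEnd t :=
  (x.existsUnique_partner_eq t).choose_spec.2 a h

lemma freeEnd_injective (x : HalfDiagram P M) : Function.Injective x.freeEnd := by
  intro t t' h
  simpa [partner_freeEnd] using congr(x.partner $h)

/-- The half diagram `x` contains the arcs in the list `l`. -/
def HasArcs (x : HalfDiagram P M) (l : List (P × P)) : Prop :=
  ∀ p ∈ l, x.partner p.1 = .inl p.2

lemma hasArcs_cons {x : HalfDiagram P M} {p : P × P} {l : List (P × P)} :
    x.HasArcs (p :: l) ↔ x.partner p.1 = .inl p.2 ∧ x.HasArcs l :=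
  List.forall_mem_cons

lemma HasArcs.exists_of_mem {x : HalfDiagram P M} {l : List (P × P)} (h : x.HasArcs l) {a : P}
    (ha : a ∈ endpoints l) : ∃ b, x.partner a = .inl b ∧ ((a, b) ∈ l ∨ (b, a) ∈ l) := by
  obtain ⟨b, hab | hba⟩ := mem_endpoints.1 ha
  · exact ⟨b, h _ hab, .inl hab⟩
  · exact ⟨b, x.partner_symm (h _ hba), .inr hba⟩

/-- The list `l` contains every horizontal arc of `x` exactly once, in one of its orientations. -/
structure IsArcList (x : HalfDiagram P M) (l : List (P × P)) : Prop where
  nodup : (endpoints l).Nodup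
  hasArcs : x.HasArcs l
  mem_endpoints : ∀ {a b}, x.partner a = .inl b → a ∈ endpoints l

lemma IsArcList.mem_or_mem {x : HalfDiagram P M} {l : List (P × P)} (hl : x.IsArcList l) {a b : P}
    (h : x.partner a = .inl b) : (a, b) ∈ l ∨ (b, a) ∈ l := by
  obtain ⟨c, hc, hac⟩ := hl.hasArcs.exists_of_mem (hl.mem_endpoints h)
  obtain rfl : b = c := by simpa [h] using hc
  exact hac

lemma exists_hasArcs_forall_mem (x : HalfDiagram P M) (s : List P) :
    ∃ l, (endpoints l).Nodup ∧ x.HasArcs l ∧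
      ∀ a ∈ s, ∀ b, x.partner a = .inl b → a ∈ endpoints l := by
  induction s with
  | nil => exact ⟨[], by simp [HasArcs]⟩
  | cons a s ih =>
    obtain ⟨l, hl, hx, hs⟩ := ih
    by_cases h : ∃ b, x.partner a = .inl b ∧ a ∉ endpoints l
    · obtain ⟨b, hab, ha⟩ := h
      have hne : a ≠ b := fun h ↦ x.partner_ne a (by rwa [← h] at hab)
      have hb : b ∉ endpoints l := fun hb ↦ by
        obtain ⟨c, hc, hbc⟩ := hx.exists_of_mem hb
        obtain rfl : a = c := by simpa [x.partner_symm hab] using hc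
        exact ha (_root_.mem_endpoints.2 ⟨b, hbc.symm⟩)
      refine ⟨(a, b) :: l, by simp [hne, ha, hb, hl], hasArcs_cons.2 ⟨hab, hx⟩, ?_⟩
      simp only [endpoints_cons, List.mem_cons]
      grind
    · exact ⟨l, hl, hx, by grind⟩

lemma exists_isArcList [Finite P] (x : HalfDiagram P M) : ∃ l, x.IsArcList l := by
  have := Fintype.ofFinite P
  obtain ⟨l, hl, hx, h⟩ := x.exists_hasArcs_forall_mem Finset.univ.toList
  exact ⟨l, hl, hx, fun hab ↦ h _ (by simp) _ hab⟩

section Points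

variable [Fintype M] {x y : HalfDiagram P M} {l l' : List (P × P)}

/-- The end points of the arcs `l`, followed by the ends of the vertical strands of `x`. -/
noncomputable def points (x : HalfDiagram P M) (l : List (P × P)) : List P :=
  endpoints l ++ Finset.univ.toList.map x.freeEnd

lemma length_points : (x.points l).length = 2 * l.length + Fintype.card M := by
  simp [points, length_endpoints]

lemma HasArcs.nodup_points (hl : (endpoints l).Nodup) (h : x.HasArcs l) : (x.points l).Nodup := by
  refine hl.append (Finset.univ.nodup_toList.map x.freeEnd_injective) fun a ha ha' ↦ ?_
  obtain ⟨t, -, rfl⟩ := List.mem_map.1 ha'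
  obtain ⟨b, hb, -⟩ := h.exists_of_mem ha
  simp [x.partner_freeEnd] at hb

lemma HasArcs.two_mul_length_add_card_le [Fintype P] (hl : (endpoints l).Nodup)
    (h : x.HasArcs l) : 2 * l.length + Fintype.card M ≤ Fintype.card P :=
  length_points (x := x) ▸ (h.nodup_points hl).length_le_card

lemma IsArcList.mem_points (h : x.IsArcList l) (a : P) : a ∈ x.points l := by
  cases ha : x.partner a with
  | inl b => exact List.mem_append_left _ (h.mem_endpoints ha)
  | inr t => simp [points, eq_freeEnd ha]

lemma IsArcList.two_mul_length_add_card [Fintype P] (h : x.IsArcList l) :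
    2 * l.length + Fintype.card M = Fintype.card P := by
  classical
  rw [← length_points (x := x), ← List.toFinset_card_of_nodup (h.hasArcs.nodup_points h.nodup),
    Finset.card_eq_iff_eq_univ]
  simp [Finset.eq_univ_iff_forall, h.mem_points]

omit [Fintype M] in
lemma IsArcList.length_eq [Finite P] [Finite M] (hx : x.IsArcList l) (hy : y.IsArcList l') :
    l.length = l'.length := by
  have := Fintype.ofFinite P
  have := Fintype.ofFinite M
  have := hx.two_mul_length_add_card.trans hy.two_mul_length_add_card.symm
  omega

lemma HasArcs.isArcList [Fintype P] (hl : (endpoints l).Nodup) (h : x.HasArcs l)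
    (hcard : 2 * l.length + Fintype.card M = Fintype.card P) : x.IsArcList l := by
  classical
  refine ⟨hl, h, fun {a b} hab ↦ ?_⟩
  have ha : a ∈ (x.points l).toFinset := by
    rw [← length_points (x := x), ← List.toFinset_card_of_nodup (h.nodup_points hl),
      Finset.card_eq_iff_eq_univ] at hcard
    exact hcard ▸ Finset.mem_univ a
  obtain ha | ha := List.mem_append.1 (List.mem_toFinset.1 ha)
  · exact ha
  · obtain ⟨t, -, rfl⟩ := List.mem_map.1 ha
    simp [x.partner_freeEnd] at hab

end Points

lemma IsArcList.exists_perm_smul_eq [Finite M] {x y : HalfDiagram P M} {l l' : List (P × P)}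
    (hx : x.IsArcList l) (hy : y.IsArcList l') (hlen : l.length = l'.length) :
    ∃ g : Perm P, l.map (Prod.map g g) = l' ∧ g • x = y := by
  have := Fintype.ofFinite M
  obtain ⟨g, hg⟩ := exists_perm_map_eq (hx.hasArcs.nodup_points hx.nodup)
    (hy.hasArcs.nodup_points hy.nodup) (by rw [length_points, length_points, hlen])
  rw [points, points, List.map_append, ← endpoints_map] at hg
  obtain ⟨harcs, hfree⟩ := List.append_inj hg (by simp [length_endpoints, hlen])
  replace harcs := endpoints_injective harcs
  replace hfree : ∀ t, g (x.freeEnd t) = y.freeEnd t := by simpa using hfree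
  have mem {a b : P} (h : (a, b) ∈ l) : y.partner (g a) = .inl (g b) :=
    hy.hasArcs (g a, g b) (harcs ▸ List.mem_map_of_mem h)
  refine ⟨g, harcs, perm_smul_eq_iff.2 fun a ↦ ?_⟩
  cases ha : x.partner a with
  | inl b =>
    obtain h | h := hx.mem_or_mem ha
    · exact mem h
    · exact y.partner_symm (mem h)
  | inr t => rw [eq_freeEnd ha, hfree, y.partner_freeEnd, Sum.map_inr, id]

lemma IsArcList.exists_label_smul_eq [Finite M] {x y : HalfDiagram P M} {l : List (P × P)}
    (hx : x.IsArcList l) (hy : y.IsArcList l) : ∃ m : Perm M, m • x = y := by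
  have exists_label (t : M) : ∃ s, y.partner (x.freeEnd t) = .inr s := by
    cases h : y.partner (x.freeEnd t) with
    | inl b =>
      obtain ⟨c, hc, -⟩ := hx.hasArcs.exists_of_mem (hy.mem_endpoints h)
      simp [x.partner_freeEnd] at hc
    | inr s => exact ⟨s, rfl⟩
  choose m hm using exists_label
  have hinj : Function.Injective m := fun t t' h ↦ x.freeEnd_injective <| by
    rw [eq_freeEnd (hm t), eq_freeEnd (hm t'), h]
  refine ⟨ofBijective m (Finite.injective_iff_bijective.1 hinj),
    HalfDiagram.ext (funext fun a ↦ ?_)⟩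
  rw [partner_label_smul]
  cases ha : x.partner a with
  | inl b =>
    obtain h | h := hx.mem_or_mem ha
    · exact (hy.hasArcs _ h).symm
    · exact (y.partner_symm (hy.hasArcs _ h)).symm
  | inr t => rw [eq_freeEnd ha, hm, Sum.map_inr, ofBijective_apply]

lemma IsArcList.label_smul {x : HalfDiagram P M} {l : List (P × P)} (hx : x.IsArcList l)
    (m : Perm M) : (m • x).IsArcList l where
  nodup := hx.nodup
  hasArcs p hp := by rw [partner_label_smul, hx.hasArcs p hp, Sum.map_inl, id]
  mem_endpoints {a b} h := by
    cases ha : x.partner a with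
    | inl c => exact hx.mem_endpoints ha
    | inr t => simp [partner_label_smul, ha] at h

lemma label_smul_injective {x : HalfDiagram P M} :
    Function.Injective fun m : Perm M ↦ m • x := by
  intro m m' h
  ext t
  simpa [partner_label_smul, partner_freeEnd] using congr(partner $h (x.freeEnd t))

lemma nonempty_of_card [Fintype P] [Fintype M] {i : ℕ}
    (h : 2 * i + Fintype.card M = Fintype.card P) : Nonempty (HalfDiagram P M) := by
  let e : (Fin i ⊕ Fin i) ⊕ M ≃ P := Fintype.equivOfCardEq (by simp [← h, two_mul])
  refine ⟨relabel e (Equiv.refl M) ⟨fun a ↦ a.map (.inl ∘ Sum.swap) id, ?_, ?_, fun t ↦ ?_⟩⟩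
  · grind [Sum.swap_inl, Sum.swap_inr]
  · rintro ((k | k) | t) <;> simp
  · exact ⟨.inr t, by simp⟩

end HalfDiagram

namespace HalfDiagram

section Stabilizer

variable {P M : Type*} [DecidableEq P] {x : HalfDiagram P M} {a b c d : P} {g : Perm P}

lemma swap_smul_of_partner (hab : x.partner a = .inl b) : swap a b • x = x := by
  refine perm_smul_eq_iff.2 fun w ↦ ?_
  cases hw : x.partner w with grind [x.partner_symm]

lemma swap_mul_swap_smul_of_partner (hne : [a, b, c, d].Nodup) (hab : x.partner a = .inl b)
    (hcd : x.partner c = .inl d) : (swap a c * swap b d) • x = x := by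
  have hba := x.partner_symm hab
  have hdc := x.partner_symm hcd
  refine perm_smul_eq_iff.2 fun w ↦ ?_
  rw [Perm.mul_apply]
  cases hw : x.partner w with
  | inl v => grind [x.partner_symm hw, Perm.mul_apply]
  | inr t => grind

lemma swap_smul_eq_swap_smul (hne : [a, b, c, d].Nodup) (hac : x.partner a = .inl c)
    (hbd : x.partner b = .inl d) : swap b c • x = swap a d • x := by
  rw [← inv_smul_eq_iff, swap_inv, ← mul_smul, swap_comm b c]
  exact swap_mul_swap_smul_of_partner (by grind) hac (x.partner_symm hbd)

/-- If `g` fixes `x` and moves `a`, then the involution exchanging the arcs at `a` and at `g a`, or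
reversing the arc at `a` if `g a` is its other end, makes `g` fix `a` as well. -/
lemma exists_swap_mul_card_support_lt [Fintype P] (hg : g • x = x) (ha : g a ≠ a)
    {S : Submonoid (Perm P)} (swap_mem : ∀ a b, x.partner a = .inl b → swap a b ∈ S)
    (swap_mul_swap_mem : ∀ a b c d, [a, b, c, d].Nodup → x.partner a = .inl b →
      x.partner c = .inl d → swap a c * swap b d ∈ S) :
    ∃ s ∈ S, s * s = 1 ∧ s • x = x ∧ (s * g).support.card < g.support.card := by
  have hpartner := perm_smul_eq_iff.1 hg
  cases hab : x.partner a with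
  | inr t =>
    have hga : x.partner (g a) = .inr t := by rw [hpartner, hab, Sum.map_inr, id]
    exact absurd ((eq_freeEnd hga).trans (eq_freeEnd hab).symm) ha
  | inl b =>
    have hgab : x.partner (g a) = .inl (g b) := by rw [hpartner, hab, Sum.map_inl]
    have hne : a ≠ b := fun h ↦ x.partner_ne a (h ▸ hab)
    obtain hba | hba := eq_or_ne (g a) b
    · exact ⟨swap a b, swap_mem a b hab, swap_mul_self a b, swap_smul_of_partner hab,
        hba ▸ Perm.card_support_swap_mul ha⟩
    · have hbb : g b ≠ b := fun h ↦ ha <| by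
        rw [h] at hgab
        simpa [x.partner_symm hab] using (x.partner_symm hgab).symm
      have hab' : g b ≠ a := fun h ↦ hba <| by
        rw [h] at hgab
        simpa [hab] using (x.partner_symm hgab).symm
      have hnodup : [a, b, g a, g b].Nodup := by simp [hne, ha.symm, hab'.symm, hba.symm, hbb.symm]
      refine ⟨swap a (g a) * swap b (g b), swap_mul_swap_mem _ _ _ _ hnodup hab hgab, ?_,
        swap_mul_swap_smul_of_partner hnodup hab hgab, ?_⟩
      · have hcomm : Commute (swap b (g b)) (swap a (g a)) :=
          swap_mul_swap_comm hne.symm hba.symm hab' (by simpa using hne.symm)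
        rw [hcomm.mul_mul_mul_comm, swap_mul_self, swap_mul_self, one_mul]
      · have hag : (swap b (g b) * g) a = g a := by
          rw [Perm.mul_apply, swap_apply_of_ne_of_ne hba (by simpa using hne)]
        calc (swap a (g a) * swap b (g b) * g).support.card
            = (swap a ((swap b (g b) * g) a) * (swap b (g b) * g)).support.card := by
              rw [hag, mul_assoc]
          _ < (swap b (g b) * g).support.card := Perm.card_support_swap_mul (by rwa [hag])
          _ < g.support.card := Perm.card_support_swap_mul hbb

theorem mem_of_perm_smul_eq [Finite P] (hg : g • x = x) {S : Submonoid (Perm P)}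
    (swap_mem : ∀ a b, x.partner a = .inl b → swap a b ∈ S)
    (swap_mul_swap_mem : ∀ a b c d, [a, b, c, d].Nodup → x.partner a = .inl b →
      x.partner c = .inl d → swap a c * swap b d ∈ S) : g ∈ S := by
  have := Fintype.ofFinite P
  induction h : g.support.card using Nat.strong_induction_on generalizing g with
  | h k ih =>
    obtain rfl | hne := eq_or_ne g 1
    · exact one_mem S
    obtain ⟨a, ha⟩ : ∃ a, g a ≠ a := by
      simpa [Perm.ext_iff] using hne
    obtain ⟨s, hs, hss, hsx, hlt⟩ :=
      exists_swap_mul_card_support_lt hg ha swap_mem swap_mul_swap_mem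
    have hsg : s * g ∈ S := ih _ (h ▸ hlt) (by rw [mul_smul, hg, hsx]) rfl
    rw [← one_mul g, ← hss, mul_assoc]
    exact mul_mem hs hsg

end Stabilizer

end HalfDiagram

section SMulEnd

variable (K : Type*) [CommRing K] {G X : Type*} [Monoid G] [MulAction G X]

variable (G X) in
/-- The permutation representation on the free module `X →₀ K` of an action of `G` on `X`. -/
noncomputable def smulEnd : G →* Module.End K (X →₀ K) where
  toFun g := Finsupp.lmapDomain K K (g • ·)
  map_one' := by ext; simp
  map_mul' g h := by ext; simp [mul_smul]

lemma smulEnd_apply (g : G) (f : X →₀ K) : smulEnd K G X g f = f.mapDomain (g • ·) :=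
  rfl

@[simp]
lemma smulEnd_single (g : G) (x : X) (s : K) :
    smulEnd K G X g (.single x s) = .single (g • x) s :=
  Finsupp.mapDomain_single

end SMulEnd

namespace HalfDiagram

/-- The half diagram `y` contains the arc `a – b`, and agrees with `x` away from `a`, `b` and their
partners in `x`. -/
def IsStackedOn {P M : Type*} (a b : P) (x y : HalfDiagram P M) : Prop :=
  y.partner a = .inl b ∧ ∀ w ≠ a, w ≠ b → x.partner w ≠ .inl a → x.partner w ≠ .inl b →
    y.partner w = x.partner w

lemma IsStackedOn.partner_eq {P M : Type*} {x y : HalfDiagram P M} {a b c d : P}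
    (h : [a, b, c, d].Nodup) (hy : IsStackedOn a b x y) (hcd : x.partner c = .inl d) :
    y.partner c = .inl d := by
  rw [hy.2 c (by grind) (by grind) (by grind) (by grind), hcd]

section ArcEnd

variable {K : Type*} [CommRing K] (δ : K) {P M : Type*} [DecidableEq P] {x : HalfDiagram P M}
  {a b c d : P} {s t : M}

/-- The result of stacking the diagram with the arcs `a – b` at the top and at the bottom onto `x`.
It vanishes if `a` and `b` are both ends of vertical strands of `x`. It is also set to zero if
`a = b`. -/
noncomputable def stackArc (a b : P) (x : HalfDiagram P M) : HalfDiagram P M →₀ K :=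
  if a = b then 0 else
    match x.partner a, x.partner b with
    | .inl c, _ => if c = b then δ • .single x 1 else .single (swap b c • x) 1
    | .inr _, .inl d => .single (swap a d • x) 1
    | .inr _, .inr _ => 0

lemma stackArc_of_partner_eq (h : x.partner a = .inl b) : stackArc δ a b x = δ • .single x 1 := by
  have hne : a ≠ b := fun hab ↦ x.partner_ne a (hab ▸ h)
  simp [stackArc, hne, h]

lemma stackArc_of_partner_left (hab : a ≠ b) (h : x.partner a = .inl c) (hbc : b ≠ c) :
    stackArc δ a b x = .single (swap b c • x) 1 := by
  simp [stackArc, hab, h, hbc.symm]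

lemma stackArc_of_free (ha : x.partner a = .inr s) (hb : x.partner b = .inr t) :
    stackArc δ a b x = 0 := by
  simp [stackArc, ha, hb]

lemma stackArc_symm (a b : P) (x : HalfDiagram P M) : stackArc δ a b x = stackArc δ b a x := by
  obtain rfl | hab := eq_or_ne a b
  · rfl
  cases ha : x.partner a with
  | inl c =>
    obtain rfl | hbc := eq_or_ne b c
    · rw [stackArc_of_partner_eq δ ha, stackArc_of_partner_eq δ (x.partner_symm ha)]
    rw [stackArc_of_partner_left δ hab ha hbc]
    cases hb : x.partner b with
    | inl d =>
      rw [stackArc_of_partner_left δ hab.symm hb (by grind [x.partner_symm]),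
        swap_smul_eq_swap_smul (by grind [x.partner_symm, x.partner_ne]) ha hb]
    | inr t => simp [stackArc, hab.symm, ha, hb]
  | inr s =>
    cases hb : x.partner b with
    | inl d =>
      have had : a ≠ d := by grind [x.partner_symm]
      simp [stackArc, hab, hab.symm, ha, hb, had.symm]
    | inr t => rw [stackArc_of_free δ ha hb, stackArc_of_free δ hb ha]

lemma stackArc_perm_smul (g : Perm P) (a b : P) (x : HalfDiagram P M) :
    stackArc δ (g a) (g b) (g • x) = (stackArc δ a b x).mapDomain (g • ·) := by
  have partner_smul (w : P) : (g • x).partner (g w) = (x.partner w).map g id :=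
    perm_smul_eq_iff.1 rfl w
  have swap_smul (w w' : P) : swap (g w) (g w') • g • x = g • swap w w' • x := by
    rw [swap_apply_apply, ← mul_smul, inv_mul_cancel_right, mul_smul]
  simp only [stackArc, partner_smul]
  cases x.partner a <;> cases x.partner b <;>
    simp [apply_ite (Finsupp.mapDomain _), Finsupp.mapDomain_single, swap_smul]

lemma stackArc_label_smul (m : Perm M) (a b : P) (x : HalfDiagram P M) :
    stackArc δ a b (m • x) = (stackArc δ a b x).mapDomain (m • ·) := by
  simp only [stackArc, partner_label_smul]
  cases x.partner a <;> cases x.partner b <;>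
    simp [apply_ite (Finsupp.mapDomain _), Finsupp.mapDomain_single, smul_comm m]

lemma partner_swap_smul (a b w : P) (x : HalfDiagram P M) :
    (swap a b • x).partner w = (x.partner (swap a b w)).map (swap a b) id := by
  rw [partner_perm_smul, swap_inv]

lemma partner_swap_smul_left (hab : a ≠ b) (h : x.partner a = .inl c) :
    (swap b c • x).partner a = .inl b := by
  have hac : a ≠ c := fun hac ↦ x.partner_ne a (hac ▸ h)
  rw [partner_swap_smul, swap_apply_of_ne_of_ne hab hac, h, Sum.map_inl, swap_apply_right]

lemma partner_swap_smul_of_ne {w : P} (hab : w ≠ a) (hb : w ≠ b) (ha' : x.partner w ≠ .inl a)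
    (hb' : x.partner w ≠ .inl b) : (swap a b • x).partner w = x.partner w := by
  rw [partner_swap_smul, swap_apply_of_ne_of_ne hab hb]
  cases hw : x.partner w with grind

lemma isStackedOn_swap_smul (hab : a ≠ b) (ha : x.partner a = .inl c) :
    IsStackedOn a b x (swap b c • x) := by
  refine ⟨partner_swap_smul_left hab ha, fun w hwa hwb hwa' hwb' ↦ ?_⟩
  exact partner_swap_smul_of_ne hwb (by grind [x.partner_symm]) hwb' (by grind [x.partner_symm])

lemma stackArc_cases (hab : a ≠ b) (x : HalfDiagram P M) :
    (x.partner a = .inl b ∧ stackArc δ a b x = δ • .single x 1) ∨ stackArc δ a b x = 0 ∨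
      ∃ y, IsStackedOn a b x y ∧ stackArc δ a b x = .single y 1 := by
  cases ha : x.partner a with
  | inl c =>
    obtain rfl | hbc := eq_or_ne b c
    · exact .inl ⟨rfl, stackArc_of_partner_eq δ ha⟩
    · exact .inr (.inr ⟨_, isStackedOn_swap_smul hab ha, stackArc_of_partner_left δ hab ha hbc⟩)
  | inr s =>
    cases hb : x.partner b with
    | inl d =>
      have had : a ≠ d := by grind [x.partner_symm]
      obtain ⟨hy, hyx⟩ := isStackedOn_swap_smul hab.symm hb
      refine .inr (.inr ⟨_, ⟨partner_symm _ hy, fun w hwa hwb hwa' hwb' ↦ ?_⟩, ?_⟩)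
      · exact hyx w hwb hwa hwb' hwa'
      · rw [stackArc_symm, stackArc_of_partner_left δ hab.symm hb had]
    | inr t => exact .inr (.inl (stackArc_of_free δ ha hb))

lemma stackArc_eq_zero_or (hab : a ≠ b) (x : HalfDiagram P M) : stackArc δ a b x = 0 ∨
    ∃ k y, IsStackedOn a b x y ∧ stackArc δ a b x = δ ^ k • .single y 1 := by
  obtain ⟨h, hx⟩ | hx | ⟨y, hy, hx⟩ := stackArc_cases δ hab x
  · exact .inr ⟨1, x, ⟨h, fun _ _ _ _ _ ↦ rfl⟩, by rw [hx, pow_one]⟩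
  · exact .inl hx
  · exact .inr ⟨0, y, hy, by rw [hx, pow_zero, one_smul]⟩

variable (K M) in
/-- The endomorphism of the space spanned by half diagrams that stacks an arc onto each of them. -/
noncomputable def arcEnd (a b : P) : Module.End K (HalfDiagram P M →₀ K) :=
  Finsupp.linearCombination K (stackArc δ a b)

lemma arcEnd_single (a b : P) (x : HalfDiagram P M) :
    arcEnd K δ M a b (.single x 1) = stackArc δ a b x := by
  rw [arcEnd, Finsupp.linearCombination_single, one_smul]

lemma smulEnd_mul_arcEnd (g : Perm P) (a b : P) :
    smulEnd K (Perm P) _ g * arcEnd K δ M a b =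
      arcEnd K δ M (g a) (g b) * smulEnd K (Perm P) _ g := by
  refine Finsupp.lhom_ext' fun x ↦ LinearMap.ext_ring ?_
  simp [arcEnd_single, stackArc_perm_smul, smulEnd_apply]

lemma smulEnd_label_mul_arcEnd (m : Perm M) (a b : P) :
    smulEnd K (Perm M) _ m * arcEnd K δ M a b =
      arcEnd K δ M a b * smulEnd K (Perm M) _ m := by
  refine Finsupp.lhom_ext' fun x ↦ LinearMap.ext_ring ?_
  simp [arcEnd_single, stackArc_label_smul, smulEnd_apply]

lemma arcEnd_symm (a b : P) : arcEnd K δ M a b = arcEnd K δ M b a := by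
  rw [arcEnd, arcEnd, funext (stackArc_symm δ a b)]

lemma mul_arcEnd_eq {f g : Module.End K (HalfDiagram P M →₀ K)}
    (h : ∀ x : HalfDiagram P M, x.partner a = .inl b → f (.single x 1) = g (.single x 1)) :
    f * arcEnd K δ M a b = g * arcEnd K δ M a b := by
  refine Finsupp.lhom_ext' fun x ↦ LinearMap.ext_ring ?_
  simp only [LinearMap.comp_apply, Finsupp.lsingle_apply, Module.End.mul_apply, arcEnd_single]
  obtain rfl | hab := eq_or_ne a b
  · simp [stackArc]
  obtain hx | ⟨k, y, ⟨hy, -⟩, hx⟩ := stackArc_eq_zero_or δ hab x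
  · simp [hx]
  · rw [hx, map_smul, map_smul, h y hy]

lemma smulEnd_swap_mul_arcEnd (a b : P) :
    smulEnd K (Perm P) _ (swap a b) * arcEnd K δ M a b = arcEnd K δ M a b := by
  nth_rw 2 [← one_mul (arcEnd K δ M a b)]
  exact mul_arcEnd_eq δ fun x h ↦ by simp [swap_smul_of_partner h]

lemma arcEnd_mul_smulEnd_swap (a b : P) :
    arcEnd K δ M a b * smulEnd K (Perm P) _ (swap a b) = arcEnd K δ M a b := by
  have h := smulEnd_mul_arcEnd δ (M := M) (swap a b) b a
  rw [swap_apply_left, swap_apply_right] at h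
  rw [← h, ← arcEnd_symm, smulEnd_swap_mul_arcEnd]

lemma arcEnd_mul_self (a b : P) :
    arcEnd K δ M a b * arcEnd K δ M a b = δ • arcEnd K δ M a b := by
  rw [← one_mul (arcEnd K δ M a b), ← smul_mul_assoc, one_mul]
  exact mul_arcEnd_eq δ fun x h ↦ by simp [arcEnd_single, stackArc_of_partner_eq δ h]

lemma arcEnd_mul_arcEnd (h : [a, b, c].Nodup) :
    arcEnd K δ M a b * arcEnd K δ M b c =
      smulEnd K (Perm P) _ (swap a c) * arcEnd K δ M b c := by
  have hab : a ≠ b := by grind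
  have hac : a ≠ c := by grind
  refine mul_arcEnd_eq δ fun x hx ↦ ?_
  rw [arcEnd_single, stackArc_symm, stackArc_of_partner_left δ hab.symm hx hac, smulEnd_single]

section Commute

variable (h : [a, b, c, d].Nodup)
include h

lemma arcEnd_arcEnd_of_partner_eq (hcd : x.partner c = .inl d) :
    arcEnd K δ M a b (arcEnd K δ M c d (.single x 1)) =
      arcEnd K δ M c d (arcEnd K δ M a b (.single x 1)) := by
  simp only [arcEnd_single, stackArc_of_partner_eq δ hcd, map_smul]
  obtain hx | ⟨k, y, hy, hx⟩ := stackArc_eq_zero_or δ (show a ≠ b by grind) x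
  · simp [hx]
  · rw [hx, map_smul, arcEnd_single, stackArc_of_partner_eq δ (hy.partner_eq h hcd), smul_comm]

lemma arcEnd_arcEnd_of_partner_ne {c' : P} (hc : x.partner c = .inl c') (ha : c' ≠ a)
    (hb : c' ≠ b) (hd : c' ≠ d) :
    arcEnd K δ M a b (arcEnd K δ M c d (.single x 1)) =
      arcEnd K δ M c d (arcEnd K δ M a b (.single x 1)) := by
  have hcd : c ≠ d := by grind
  have arcEnd_cd {y : HalfDiagram P M} (hy : y.partner c = .inl c') :
      arcEnd K δ M c d (.single y 1) = smulEnd K (Perm P) _ (swap d c') (.single y 1) := by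
    rw [arcEnd_single, stackArc_of_partner_left δ hcd hy hd.symm, smulEnd_single]
  have conj := smulEnd_mul_arcEnd (M := M) δ (swap d c') a b
  rw [swap_apply_of_ne_of_ne (by grind) ha.symm, swap_apply_of_ne_of_ne (by grind) hb.symm] at conj
  rw [arcEnd_cd hc, ← Module.End.mul_apply, ← conj, Module.End.mul_apply, arcEnd_single]
  obtain hx | ⟨k, y, hy, hx⟩ := stackArc_eq_zero_or δ (show a ≠ b by grind) x
  · simp [hx]
  · have hyc := hy.partner_eq (c := c) (d := c') (by grind [x.partner_ne]) hc
    rw [hx, map_smul, map_smul, arcEnd_cd hyc]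

lemma arcEnd_arcEnd_of_partner_eq_left (hca : x.partner c = .inl a) :
    arcEnd K δ M a b (arcEnd K δ M c d (.single x 1)) =
      arcEnd K δ M c d (arcEnd K δ M a b (.single x 1)) := by
  have hab : a ≠ b := by grind
  have hbc : b ≠ c := by grind
  have hcd : c ≠ d := by grind
  have hda : d ≠ a := by grind
  have hbd : b ≠ d := by grind
  have hac := x.partner_symm hca
  have conj_da := smulEnd_mul_arcEnd (M := M) δ (swap d a) d b
  have conj_bc := smulEnd_mul_arcEnd (M := M) δ (swap b c) b d
  rw [swap_apply_left, swap_apply_of_ne_of_ne hbd hab.symm] at conj_da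
  rw [swap_apply_left, swap_apply_of_ne_of_ne hbd.symm hcd.symm] at conj_bc
  rw [arcEnd_single, arcEnd_single, stackArc_of_partner_left δ hcd hca hda,
    stackArc_of_partner_left δ hab hac hbc, ← smulEnd_single, ← smulEnd_single,
    ← Module.End.mul_apply, ← Module.End.mul_apply, ← conj_da, ← conj_bc, ← arcEnd_symm δ b d,
    Module.End.mul_apply, Module.End.mul_apply, arcEnd_single]
  obtain hx | ⟨k, y, hy, hx⟩ := stackArc_eq_zero_or δ hbd x
  · simp [hx]
  · have hya : y.partner a = .inl c := hy.partner_eq (by grind) hac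
    rw [hx, map_smul, map_smul, smulEnd_single, smulEnd_single, swap_comm d a,
      swap_smul_eq_swap_smul (by grind) hya hy.1]

lemma arcEnd_arcEnd_of_matched {c' : P} (hc : x.partner c = .inl c') :
    arcEnd K δ M a b (arcEnd K δ M c d (.single x 1)) =
      arcEnd K δ M c d (arcEnd K δ M a b (.single x 1)) := by
  obtain rfl | hd := eq_or_ne c' d
  · exact arcEnd_arcEnd_of_partner_eq δ h hc
  obtain rfl | ha := eq_or_ne c' a
  · exact arcEnd_arcEnd_of_partner_eq_left δ h hc
  obtain rfl | hb := eq_or_ne c' b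
  · rw [arcEnd_symm δ a c']
    exact arcEnd_arcEnd_of_partner_eq_left δ (by grind) hc
  · exact arcEnd_arcEnd_of_partner_ne δ h hc ha hb hd

lemma arcEnd_comm :
    arcEnd K δ M a b * arcEnd K δ M c d = arcEnd K δ M c d * arcEnd K δ M a b := by
  refine Finsupp.lhom_ext' fun x ↦ LinearMap.ext_ring ?_
  simp only [LinearMap.comp_apply, Finsupp.lsingle_apply, Module.End.mul_apply]
  cases hc : x.partner c with
  | inl c' => exact arcEnd_arcEnd_of_matched δ h hc
  | inr s =>
    cases hd : x.partner d with
    | inl d' =>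
      rw [arcEnd_symm δ c d]
      exact arcEnd_arcEnd_of_matched δ (by grind) hd
    | inr t =>
      rw [arcEnd_single, arcEnd_single, stackArc_of_free δ hc hd, map_zero]
      obtain hx | ⟨k, y, hy, hx⟩ := stackArc_eq_zero_or δ (show a ≠ b by grind) x
      · simp [hx]
      · have hyc := hy.2 c (by grind) (by grind) (by grind) (by grind)
        have hyd := hy.2 d (by grind) (by grind) (by grind) (by grind)
        rw [hx, map_smul, arcEnd_single,
          stackArc_of_free δ (hyc.trans hc) (hyd.trans hd), smul_zero]

end Commute

variable (K P M) in
/-- The representation of the Brauer algebra on half diagrams. -/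
noncomputable def brauerData : BrauerData δ P (Module.End K (HalfDiagram P M →₀ K)) where
  r := smulEnd K (Perm P) _
  E := arcEnd K δ M
  conj := smulEnd_mul_arcEnd δ
  r_swap_mul_E := smulEnd_swap_mul_arcEnd δ
  E_mul_r_swap := arcEnd_mul_smulEnd_swap δ
  E_mul_self := arcEnd_mul_self δ
  E_mul_E _ _ _ := arcEnd_mul_arcEnd δ
  E_comm _ _ _ _ := arcEnd_comm δ

end ArcEnd

end HalfDiagram

namespace HalfDiagram

section ProdE

lemma IsStackedOn.hasArcs_cons {P M : Type*} {a b : P} {l : List (P × P)} {x y : HalfDiagram P M}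
    (hl : (endpoints ((a, b) :: l)).Nodup) (h : IsStackedOn a b x y) (hx : x.HasArcs l) :
    y.HasArcs ((a, b) :: l) := by
  simp only [endpoints_cons, List.nodup_cons, List.mem_cons, not_or] at hl
  refine HalfDiagram.hasArcs_cons.2 ⟨h.1, fun p hp ↦ h.partner_eq ?_ (hx p hp)⟩
  have hp₁ : p.1 ∈ endpoints l := mem_endpoints.2 ⟨p.2, .inl hp⟩
  have hp₂ : p.2 ∈ endpoints l := mem_endpoints.2 ⟨p.1, .inr hp⟩
  have hne : p.1 ≠ p.2 := ne_of_mem_of_nodup_endpoints hl.2.2 hp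
  grind

variable {K : Type*} [CommRing K] (δ : K) {P M : Type*} [DecidableEq P] {l : List (P × P)}
  {x y : HalfDiagram P M}

lemma brauerData_prodE_cons (p : P × P) (f : HalfDiagram P M →₀ K) :
    (brauerData K δ P M).prodE (p :: l) f =
      arcEnd K δ M p.1 p.2 ((brauerData K δ P M).prodE l f) := by
  rw [BrauerData.prodE_cons, Module.End.mul_apply]
  rfl

lemma HasArcs.brauerData_prodE_single (h : x.HasArcs l) :
    (brauerData K δ P M).prodE l (.single x 1) = δ ^ l.length • .single x 1 := by
  induction l with
  | nil => simp
  | cons p l ih =>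
    obtain ⟨hp, h⟩ := hasArcs_cons.1 h
    rw [brauerData_prodE_cons, ih h, map_smul, arcEnd_single, stackArc_of_partner_eq δ hp,
      smul_smul, List.length_cons, pow_succ]

lemma brauerData_prodE_cases (hl : (endpoints l).Nodup) (x : HalfDiagram P M) :
    x.HasArcs l ∨ (brauerData K δ P M).prodE l (.single x 1) = 0 ∨
      ∃ k < l.length, ∃ y : HalfDiagram P M, y.HasArcs l ∧
        (brauerData K δ P M).prodE l (.single x 1) = δ ^ k • .single y 1 := by
  induction l with
  | nil => exact .inl (by simp [HasArcs])
  | cons p l ih =>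
    have hab : p.1 ≠ p.2 := ne_of_mem_of_nodup_endpoints hl List.mem_cons_self
    have prodE_cons := brauerData_prodE_cons δ (l := l) p (.single x (1 : K))
    obtain hx | h | ⟨k, hk, y, hy, h⟩ := ih (hl.sublist (by simp [List.Sublist.cons]))
    · rw [hx.brauerData_prodE_single, map_smul, arcEnd_single] at prodE_cons
      obtain ⟨hp, h'⟩ | h' | ⟨z, hz, h'⟩ := stackArc_cases δ hab x <;> rw [h'] at prodE_cons
      · exact .inl (hasArcs_cons.2 ⟨hp, hx⟩)
      · exact .inr (.inl (by rw [prodE_cons, smul_zero]))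
      · exact .inr (.inr ⟨l.length, by simp, z, hz.hasArcs_cons hl hx, prodE_cons⟩)
    · exact .inr (.inl (by rw [prodE_cons, h, map_zero]))
    · rw [h, map_smul, arcEnd_single] at prodE_cons
      obtain ⟨hp, h'⟩ | h' | ⟨z, hz, h'⟩ := stackArc_cases δ hab y <;> rw [h'] at prodE_cons
      · exact .inr (.inr ⟨k + 1, by simpa, y, hasArcs_cons.2 ⟨hp, hy⟩,
          by rw [prodE_cons, pow_succ, smul_smul]⟩)
      · exact .inr (.inl (by rw [prodE_cons, smul_zero]))
      · exact .inr (.inr ⟨k, by simpa using hk.le, z, hz.hasArcs_cons hl hy, prodE_cons⟩)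

lemma brauerData_prodE_eq_zero_or (hl : (endpoints l).Nodup) (x : HalfDiagram P M) :
    (brauerData K δ P M).prodE l (.single x 1) = 0 ∨ ∃ k, ∃ y : HalfDiagram P M, y.HasArcs l ∧
        (brauerData K δ P M).prodE l (.single x 1) = δ ^ k • .single y 1 := by
  obtain hx | h | ⟨k, -, y, hy, h⟩ := brauerData_prodE_cases δ hl x
  · exact .inr ⟨_, x, hx, hx.brauerData_prodE_single δ⟩
  · exact .inl h
  · exact .inr ⟨_, y, hy, h⟩

lemma brauerData_prodE_eq_zero [Fintype P] [Fintype M] (hl : (endpoints l).Nodup)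
    (hcard : Fintype.card P < 2 * l.length + Fintype.card M) :
    (brauerData K δ P M).prodE l = 0 := by
  refine Finsupp.lhom_ext' fun x ↦ LinearMap.ext_ring ?_
  obtain h | ⟨k, y, hy, -⟩ := brauerData_prodE_eq_zero_or δ hl x
  · exact h
  · have := hy.two_mul_length_add_card_le hl
    omega

end ProdE

end HalfDiagram

section Commutant

variable {K : Type*} [CommRing K] {L X Ω : Type*} [Group L] [MulAction L X]

variable (K L X) in
/-- The algebra of endomorphisms of the permutation module `X →₀ K` that commute with `L`. -/
noncomputable def commutant : Subalgebra K (Module.End K (X →₀ K)) :=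
  Subalgebra.centralizer K (Set.range (smulEnd K L X))

lemma mem_commutant {f : Module.End K (X →₀ K)} :
    f ∈ commutant K L X ↔ ∀ m, smulEnd K L X m * f = f * smulEnd K L X m := by
  simp [commutant, Subalgebra.mem_centralizer_iff]

lemma apply_smul_smul_of_mem_commutant {f : Module.End K (X →₀ K)} (hf : f ∈ commutant K L X)
    (m : L) (x y : X) : f (.single (m • y) 1) (m • x) = f (.single y 1) x := by
  rw [← smulEnd_single, ← Module.End.mul_apply, ← mem_commutant.1 hf, Module.End.mul_apply,
    smulEnd_apply, Finsupp.mapDomain_apply (MulAction.injective m)]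

lemma mul_apply_single_apply [Fintype X] (f g : Module.End K (X →₀ K)) (x y : X) :
    (f * g) (.single y 1) x = ∑ z, f (.single z 1) x * g (.single y 1) z := by
  have hg : g (.single y 1) = ∑ z, g (.single y 1) z • .single z 1 := by
    simp [Finsupp.univ_sum_single]
  rw [Module.End.mul_apply]
  conv_lhs => rw [hg]
  simp [map_smul, -Finsupp.smul_single, mul_comm]

lemma exists_bijective_smul_rep (hL : ∀ x : X, Function.Injective fun m : L ↦ m • x) :
    ∃ rep : MulAction.orbitRel.Quotient L X → X,
      Function.Bijective fun p : L × MulAction.orbitRel.Quotient L X ↦ p.1 • rep p.2 := by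
  refine ⟨Quotient.out, fun ⟨m, ω⟩ ⟨m', ω'⟩ h ↦ ?_, fun x ↦ ?_⟩
  · obtain rfl : ω = ω' := by
      have := congrArg (Quotient.mk (MulAction.orbitRel L X)) h
      simpa using this
    exact Prod.ext (hL _ h) rfl
  · obtain ⟨m, hm⟩ := Quotient.mk_out (s := MulAction.orbitRel L X) x
    exact ⟨(m⁻¹, ⟦x⟧), by simp only [← hm, inv_smul_smul]⟩

section OrbitUnit

variable [Fintype L]

variable (K L) in
/-- The element of the commutant that takes `m • y` to `m • x` for all `m` in `L`, and vanishes
outside of the orbit of `y`. This description is correct for free actions. -/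
noncomputable def orbitUnit (x y : X) : Module.End K (X →₀ K) :=
  ∑ m : L, Finsupp.lsingle (m • x) ∘ₗ Finsupp.lapply (m • y)

lemma orbitUnit_mem_commutant (x y : X) : orbitUnit K L x y ∈ commutant K L X := by
  refine mem_commutant.2 fun m ↦ ?_
  rw [orbitUnit, Finset.mul_sum, Finset.sum_mul]
  refine Fintype.sum_equiv (Equiv.mulLeft m) _ _ fun l ↦ LinearMap.ext fun f ↦ ?_
  simp [smulEnd_apply, mul_smul, Finsupp.mapDomain_apply (MulAction.injective m),
    Finsupp.mapDomain_single]

end OrbitUnit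

section FreeAction

-- `hrep` says that the action of `L` is free and that `rep` picks one point of each orbit.

variable {rep : Ω → X} (hrep : Function.Bijective fun p : L × Ω ↦ p.1 • rep p.2)
include hrep

lemma smul_rep_eq_rep_iff {m : L} {ω ω' : Ω} : m • rep ω = rep ω' ↔ m = 1 ∧ ω = ω' := by
  rw [← one_smul L (rep ω')]
  exact (hrep.injective.eq_iff (a := (m, ω)) (b := (1, ω'))).trans Prod.mk_inj

lemma commutant_ext {f g : Module.End K (X →₀ K)} (hf : f ∈ commutant K L X)
    (hg : g ∈ commutant K L X)
    (h : ∀ ω x, f (.single x 1) (rep ω) = g (.single x 1) (rep ω)) : f = g := by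
  refine Finsupp.lhom_ext' fun y ↦ LinearMap.ext_ring (Finsupp.ext fun x ↦ ?_)
  obtain ⟨⟨m, ω⟩, rfl⟩ := hrep.surjective x
  have := h ω (m⁻¹ • y)
  rwa [← apply_smul_smul_of_mem_commutant hf m, ← apply_smul_smul_of_mem_commutant hg m,
    smul_inv_smul] at this

variable [Fintype L]

lemma orbitUnit_rep_apply [DecidableEq X] [DecidableEq Ω] (ω ω' : Ω) (x y : X) :
    orbitUnit K L (rep ω) x (.single y 1) (rep ω') = if ω = ω' ∧ x = y then 1 else 0 := by
  classical
  simp only [orbitUnit, LinearMap.sum_apply, LinearMap.comp_apply, Finsupp.lapply_apply,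
    Finsupp.lsingle_apply, Finsupp.finsetSum_apply, Finsupp.single_apply,
    smul_rep_eq_rep_iff hrep, ite_and]
  by_cases h : ω = ω' <;> simp [h, eq_comm]

lemma eq_sum_orbitUnit [Fintype X] [Fintype Ω] {f : Module.End K (X →₀ K)}
    (hf : f ∈ commutant K L X) :
    f = ∑ ω, ∑ x, f (.single x 1) (rep ω) • orbitUnit K L (rep ω) x := by
  classical
  refine commutant_ext hrep hf (sum_mem fun ω _ ↦ sum_mem fun x _ ↦
    Subalgebra.smul_mem _ (orbitUnit_mem_commutant _ _) _) fun ω x ↦ ?_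
  simp [orbitUnit_rep_apply hrep, ite_and]

/-- The coefficients of the matrix over the group algebra that describes `f` in terms of the
representatives of the orbits. -/
noncomputable def groupAlgebraMatrix (rep : Ω → X) (f : Module.End K (X →₀ K)) :
    Matrix Ω Ω (MonoidAlgebra K L) :=
  .of fun ω ω' ↦ .ofCoeff (Finsupp.equivFunOnFinite.symm fun m ↦
    f (.single (m • rep ω') 1) (rep ω))

omit hrep in
lemma coeff_groupAlgebraMatrix (f : Module.End K (X →₀ K)) (ω ω' : Ω) (m : L) :
    (groupAlgebraMatrix rep f ω ω').coeff m = f (.single (m • rep ω') 1) (rep ω) :=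
  rfl

lemma groupAlgebraMatrix_mul [Finite X] [Fintype Ω] {f g : Module.End K (X →₀ K)}
    (hg : g ∈ commutant K L X) :
    (groupAlgebraMatrix rep (f * g) : Matrix Ω Ω (MonoidAlgebra K L)) =
      groupAlgebraMatrix rep f * groupAlgebraMatrix rep g := by
  have := Fintype.ofFinite X
  ext ω ω' m
  have hg' (l : L) (ω'' : Ω) : g (.single (m • rep ω') 1) (l • rep ω'') =
      g (.single ((l⁻¹ * m) • rep ω') 1) (rep ω'') := by
    rw [← apply_smul_smul_of_mem_commutant hg l⁻¹, inv_smul_smul, mul_smul]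
  rw [coeff_groupAlgebraMatrix, mul_apply_single_apply, ← hrep.sum_comp, Fintype.sum_prod_type,
    Finset.sum_comm, Matrix.mul_apply, MonoidAlgebra.coeff_sum, Finsupp.finsetSum_apply]
  refine Finset.sum_congr rfl fun ω'' _ ↦ ?_
  rw [MonoidAlgebra.coeff_mul_apply_left, Finsupp.sum_fintype _ _ (by simp)]
  simp only [coeff_groupAlgebraMatrix, hg']

lemma groupAlgebraMatrix_one [DecidableEq Ω] :
    (groupAlgebraMatrix rep (1 : Module.End K (X →₀ K)) : Matrix Ω Ω (MonoidAlgebra K L)) = 1 := by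
  classical
  ext ω ω' m
  rw [coeff_groupAlgebraMatrix, Module.End.one_apply, Finsupp.single_apply,
    smul_rep_eq_rep_iff hrep, Matrix.one_apply]
  by_cases h : ω = ω' <;> simp [h, MonoidAlgebra.one_def, Finsupp.single_apply, eq_comm]

lemma groupAlgebraMatrix_injOn : Set.InjOn (groupAlgebraMatrix (L := L) rep)
    (commutant K L X : Set (Module.End K (X →₀ K))) := by
  intro f hf g hg h
  refine commutant_ext hrep hf hg fun ω x ↦ ?_
  obtain ⟨⟨m, ω'⟩, rfl⟩ := hrep.surjective x
  simpa only [coeff_groupAlgebraMatrix] using congr((($h ω ω').coeff m))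

lemma groupAlgebraMatrix_surjOn [Finite X] [Finite Ω] :
    Set.SurjOn (groupAlgebraMatrix (L := L) rep)
      (commutant K L X : Set (Module.End K (X →₀ K))) Set.univ := by
  classical
  have := Fintype.ofFinite X
  have := Fintype.ofFinite Ω
  intro A _
  refine ⟨∑ ω, ∑ p : L × Ω, (A ω p.2).coeff p.1 • orbitUnit K L (rep ω) (p.1 • rep p.2),
    sum_mem fun ω _ ↦ sum_mem fun p _ ↦
      Subalgebra.smul_mem _ (orbitUnit_mem_commutant _ _) _, ?_⟩
  ext ω ω' m
  have hrep' (p : L × Ω) : p.1 • rep p.2 = m • rep ω' ↔ p = (m, ω') :=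
    hrep.injective.eq_iff (b := (m, ω'))
  simp only [coeff_groupAlgebraMatrix, LinearMap.sum_apply, LinearMap.smul_apply,
    Finsupp.finsetSum_apply, Finsupp.smul_apply, orbitUnit_rep_apply hrep, hrep', ite_and]
  simp

/-- The commutant of a free action of `L` is a matrix algebra over the group algebra of `L`. -/
noncomputable def commutantEquivMatrix [Finite X] [Fintype Ω] [DecidableEq Ω] :
    commutant K L X ≃ₐ[K] Matrix Ω Ω (MonoidAlgebra K L) :=
  AlgEquiv.ofBijective
    (AlgHom.ofLinearMap
      { toFun f := groupAlgebraMatrix rep f.1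
        map_add' _ _ := by ext; simp [coeff_groupAlgebraMatrix]
        map_smul' _ _ := by ext; simp [coeff_groupAlgebraMatrix] }
      (groupAlgebraMatrix_one hrep) fun _ g ↦ groupAlgebraMatrix_mul hrep g.2)
    ⟨fun f g h ↦ Subtype.ext (groupAlgebraMatrix_injOn hrep f.2 g.2 h), fun A ↦ by
      obtain ⟨f, hf, rfl⟩ := groupAlgebraMatrix_surjOn hrep (Set.mem_univ A)
      exact ⟨⟨f, hf⟩, rfl⟩⟩

omit [Fintype L] in
lemma finrank_matrix_monoidAlgebra [Nontrivial K] [Finite L] [Finite Ω] :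
    finrank K (Matrix Ω Ω (MonoidAlgebra K L)) = Nat.card (Ω × X) := by
  classical
  have := Fintype.ofFinite L
  have := Fintype.ofFinite Ω
  have b := MonoidAlgebra.basis L K
  have := Module.Free.of_basis b
  have := Module.Finite.of_basis b
  rw [finrank_matrix, finrank_eq_card_basis b, Nat.card_prod,
    ← Nat.card_congr (Equiv.ofBijective _ hrep), Nat.card_prod]
  simp only [Nat.card_eq_fintype_card]
  ring

end FreeAction

end Commutant

open Polynomial in
theorem det_ne_zero_of_degree_lt_diag {R ι : Type*} [CommRing R] [IsDomain R] [Fintype ι]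
    [DecidableEq ι] (G : Matrix ι ι R[X]) (hdiag : ∀ i, G i i ≠ 0)
    (hG : ∀ i j, i ≠ j → (G i j).degree < (G i i).degree) : G.det ≠ 0 := by
  refine fun hdet ↦ ?_
  obtain ⟨v, hv, hGv⟩ := Matrix.exists_mulVec_eq_zero_iff.2 hdet
  obtain ⟨j, hj⟩ := Function.ne_iff.1 hv
  obtain ⟨i, -, hi⟩ := Finset.exists_max_image Finset.univ (fun i ↦ (v i).degree) ⟨j, by simp⟩
  have hvi : v i ≠ 0 := fun h ↦ hj (by simpa [h] using hi j (by simp))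
  have hsum : G i i * v i = -∑ j ∈ Finset.univ.erase i, G i j * v j := by
    rw [eq_neg_iff_add_eq_zero, Finset.add_sum_erase _ (fun j ↦ G i j * v j) (Finset.mem_univ i)]
    exact congrFun hGv i
  refine lt_irrefl (G i i * v i).degree ?_
  calc (G i i * v i).degree
      = (∑ j ∈ Finset.univ.erase i, G i j * v j).degree := by rw [hsum, degree_neg]
    _ < (G i i * v i).degree := by
      refine (degree_sum_le _ _).trans_lt ((Finset.sup_lt_iff ?_).2 fun j hj ↦ ?_)
      · exact bot_lt_iff_ne_bot.2 (degree_ne_bot.2 (mul_ne_zero (hdiag i) hvi))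
      · rw [degree_mul, degree_mul]
        have h := hG i j (Finset.ne_of_mem_erase hj).symm
        calc (G i j).degree + (v j).degree ≤ (G i j).degree + (v i).degree :=
              add_le_add le_rfl (hi j (by simp))
          _ < _ := (WithBot.add_lt_add_iff_right (degree_ne_bot.2 hvi)).2 h

lemma mem_span_range_of_eq_sum_smul {R V ι : Type*} [CommRing R] [AddCommGroup V] [Module R V]
    [Fintype ι] [DecidableEq ι] {G : Matrix ι ι R} (hG : IsUnit G.det) {u v : ι → V}
    (h : ∀ i, v i = ∑ j, G i j • u j) (j : ι) : u j ∈ Submodule.span R (Set.range v) := by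
  have hu : u j = ∑ i, G⁻¹ j i • v i := by
    simp_rw [h, Finset.smul_sum, smul_smul]
    rw [Finset.sum_comm]
    simp_rw [← Finset.sum_smul, ← Matrix.mul_apply, Matrix.nonsing_inv_mul G hG]
    simp [Matrix.one_apply]
  exact hu ▸ sum_mem fun i _ ↦ Submodule.smul_mem _ _ (Submodule.subset_span ⟨i, rfl⟩)

namespace HalfDiagram

section Gram

variable {P M : Type*} [Finite P]

/-- A choice of an order and of orientations of the horizontal arcs of `x`. -/
noncomputable def arcs (x : HalfDiagram P M) : List (P × P) :=
  x.exists_isArcList.choose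

lemma isArcList_arcs (x : HalfDiagram P M) : x.IsArcList x.arcs :=
  x.exists_isArcList.choose_spec

variable [DecidableEq P]

variable (P M) in
/-- The Gram matrix of half diagrams: the entry at `(y, x)` is `δ` to the number of loops that arise
when the reflection of `y` is stacked onto `x`, or zero if the vertical strands of `y` are not
attached to those of `x` with the same labels. -/
noncomputable def gram {K : Type*} [CommRing K] (δ : K) :
    Matrix (HalfDiagram P M) (HalfDiagram P M) K :=
  .of fun y x ↦ (brauerData K δ P M).prodE y.arcs (.single x 1) y

variable {k K : Type*} [CommRing k] [Field K] [Algebra k K] {δ : K}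

open Polynomial

lemma gram_self (δ : K) (x : HalfDiagram P M) : gram P M δ x x = δ ^ x.arcs.length := by
  simp [gram, x.isArcList_arcs.hasArcs.brauerData_prodE_single δ]

lemma exists_aeval_eq_gram [Nontrivial k] (δ : K) {x y : HalfDiagram P M} (h : x ≠ y) :
    ∃ p : k[X], p.degree < y.arcs.length ∧ aeval δ p = gram P M δ y x := by
  obtain hx | hx | ⟨k, hk, z, -, hx⟩ := brauerData_prodE_cases δ y.isArcList_arcs.nodup x
  · exact ⟨0, by simp [bot_lt_iff_ne_bot], by simp [gram, hx.brauerData_prodE_single δ, h]⟩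
  · exact ⟨0, by simp [bot_lt_iff_ne_bot], by simp [gram, hx]⟩
  · obtain rfl | hz := eq_or_ne z y
    · exact ⟨X ^ k, by simpa [degree_X_pow] using hk, by simp [gram, hx]⟩
    · exact ⟨0, by simp [bot_lt_iff_ne_bot], by simp [gram, hx, hz]⟩

lemma det_gram_ne_zero [Fintype (HalfDiagram P M)] [DecidableEq (HalfDiagram P M)]
    (hδ : Transcendental k δ) : (gram P M δ).det ≠ 0 := by
  have haeval := transcendental_iff_injective.1 hδ
  have : IsDomain k[X] := haeval.isDomain
  have : IsDomain k := (C_injective (R := k)).isDomain C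
  have exists_poly (y x : HalfDiagram P M) : ∃ p : k[X], (x = y → p = X ^ y.arcs.length) ∧
      (x ≠ y → p.degree < y.arcs.length) ∧ aeval δ p = gram P M δ y x := by
    obtain rfl | h := eq_or_ne x y
    · exact ⟨X ^ x.arcs.length, by simp [gram_self]⟩
    · obtain ⟨p, hp⟩ := exists_aeval_eq_gram (k := k) δ h
      exact ⟨p, by simp [h, hp]⟩
  choose G hdiag hoff hG using exists_poly
  have hdet : (Matrix.of G).det ≠ 0 := by
    refine det_ne_zero_of_degree_lt_diag _ (fun x ↦ ?_) fun y x h ↦ ?_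
    · simp [hdiag]
    · simpa [hdiag] using hoff y x h.symm
  have : gram P M δ = (aeval (R := k) δ).mapMatrix (.of G) := by
    ext
    simp [hG]
  rw [this, ← AlgHom.map_det]
  exact (map_ne_zero_iff _ haeval).2 hdet

end Gram

end HalfDiagram

namespace HalfDiagram

section Span

variable {K : Type*} [Field K] {δ : K} {P M Ω : Type*} [DecidableEq P]
  {rep : Ω → HalfDiagram P M}

lemma brauerData_r_mem_commutant (δ : K) (g : Perm P) :
    (brauerData K δ P M).r g ∈ commutant K (Perm M) (HalfDiagram P M) := by
  refine mem_commutant.2 fun m ↦ Finsupp.lhom_ext' fun x ↦ LinearMap.ext_ring ?_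
  simp [brauerData, smul_comm m g]

lemma brauerData_prodE_mem_commutant (δ : K) (l : List (P × P)) :
    (brauerData K δ P M).prodE l ∈ commutant K (Perm M) (HalfDiagram P M) := by
  refine Subalgebra.list_prod_mem _ fun f hf ↦ ?_
  obtain ⟨p, -, rfl⟩ := List.mem_map.1 hf
  exact mem_commutant.2 fun m ↦ smulEnd_label_mul_arcEnd δ m p.1 p.2

variable [Finite P] [Finite M]
  (hrep : Function.Bijective fun p : Perm M × Ω ↦ p.1 • rep p.2)
include hrep

lemma r_mul_prodE_arcs_single_apply [DecidableEq Ω] {g : Perm P} {y : HalfDiagram P M} {ω : Ω}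
    (hg : g • y = rep ω) (x : HalfDiagram P M) (ω' : Ω) :
    ((brauerData K δ P M).r g * (brauerData K δ P M).prodE y.arcs) (.single x 1) (rep ω') =
      if ω = ω' then gram P M δ y x else 0 := by
  have := Fintype.ofFinite P
  have := Fintype.ofFinite M
  have r_apply (f : HalfDiagram P M →₀ K) (z : HalfDiagram P M) :
      (brauerData K δ P M).r g f (g • z) = f z :=
    Finsupp.mapDomain_apply (MulAction.injective g) f z
  rw [Module.End.mul_apply]
  split_ifs with h
  · rw [← h, ← hg, r_apply]
    rfl
  obtain hx | ⟨k, z, hz, hx⟩ := brauerData_prodE_eq_zero_or δ y.isArcList_arcs.nodup x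
  · rw [hx, map_zero, Finsupp.zero_apply]
  · obtain ⟨m, rfl⟩ := y.isArcList_arcs.exists_label_smul_eq
      (hz.isArcList y.isArcList_arcs.nodup y.isArcList_arcs.two_mul_length_add_card)
    have hne : m • rep ω ≠ rep ω' := fun h' ↦ h ((smul_rep_eq_rep_iff hrep).1 h').2
    rw [hx, map_smul]
    simp [brauerData, ← smul_comm m g, hg, hne]

lemma r_mul_prodE_arcs_eq_sum [Fintype (Perm M)] [Fintype (HalfDiagram P M)] [Finite Ω]
    {g : Perm P} {y : HalfDiagram P M} {ω : Ω} (hg : g • y = rep ω) :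
    (brauerData K δ P M).r g * (brauerData K δ P M).prodE y.arcs =
      ∑ x, gram P M δ y x • orbitUnit K (Perm M) (rep ω) x := by
  classical
  have := Fintype.ofFinite Ω
  rw [eq_sum_orbitUnit hrep
    (mul_mem (brauerData_r_mem_commutant δ g) (brauerData_prodE_mem_commutant δ y.arcs)),
    Finset.sum_comm]
  simp only [r_mul_prodE_arcs_single_apply hrep hg, ite_smul, zero_smul, Finset.sum_ite_eq,
    Finset.mem_univ, if_true]

omit [Finite P] [Finite M] in
theorem commutant_le_span_diagramsWithArcs [Fintype P] [Fintype M] [Finite Ω] {k : Type*}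
    [CommRing k] [Algebra k K] (hδ : Transcendental k δ) {i : ℕ}
    (hcard : 2 * i + Fintype.card M = Fintype.card P) :
    (commutant K (Perm M) (HalfDiagram P M)).toSubmodule ≤
      Submodule.span K ((brauerData K δ P M).diagramsWithArcs i) := by
  classical
  have := Fintype.ofFinite Ω
  have := Fintype.ofFinite (HalfDiagram P M)
  have exists_perm (ω : Ω) (y : HalfDiagram P M) : ∃ g : Perm P, g • y = rep ω := by
    obtain ⟨g, -, hg⟩ :=
      y.isArcList_arcs.exists_perm_smul_eq (rep ω).isArcList_arcs
        (y.isArcList_arcs.length_eq (rep ω).isArcList_arcs)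
    exact ⟨g, hg⟩
  choose g hg using exists_perm
  let D := brauerData K δ P M
  have hmem (ω : Ω) (y : HalfDiagram P M) :
      D.r (g ω y) * D.prodE y.arcs ∈ D.diagramsWithArcs i :=
    ⟨_, _, y.isArcList_arcs.nodup, by have := y.isArcList_arcs.two_mul_length_add_card; omega, rfl⟩
  have orbitUnit_mem (ω : Ω) (x : HalfDiagram P M) :
      orbitUnit K (Perm M) (rep ω) x ∈ Submodule.span K (D.diagramsWithArcs i) :=
    Submodule.span_mono (Set.range_subset_iff.2 (hmem ω)) <|
      mem_span_range_of_eq_sum_smul (u := fun x ↦ orbitUnit K (Perm M) (rep ω) x)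
        (v := fun y ↦ D.r (g ω y) * D.prodE y.arcs) (det_gram_ne_zero hδ).isUnit
        (fun y ↦ r_mul_prodE_arcs_eq_sum hrep (hg ω y)) x
  intro f hf
  rw [eq_sum_orbitUnit hrep hf]
  exact sum_mem fun ω _ ↦ sum_mem fun x _ ↦ Submodule.smul_mem _ _ (orbitUnit_mem ω x)

end Span

end HalfDiagram

namespace BrauerData

section NormalForm

variable {K : Type*} [CommRing K] {δ : K} (hδ : IsUnit δ) {P M : Type*} [Finite P] [DecidableEq P]
  {A : Type*} [Ring A] [Algebra K A] (D : BrauerData δ P A) {b : HalfDiagram P M}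
  {l l' : List (P × P)} (hb : b.IsArcList l)
include hb

omit [Finite P] in
lemma E_mul_prodE_of_isArcList {p q : P} (h : b.partner p = .inl q) :
    D.E p q * D.prodE l = δ • D.prodE l := by
  obtain h | h := hb.mem_or_mem h
  · exact D.E_mul_prodE hb.nodup h
  · rw [D.E_symm, D.E_mul_prodE hb.nodup h]

include hδ

lemma r_mul_prodE_of_smul_eq {g : Perm P} (hg : g • b = b) : D.r g * D.prodE l = D.prodE l := by
  let S : Submonoid (Perm P) :=
    { carrier := {g | D.r g * D.prodE l = D.prodE l}
      one_mem' := by simp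
      mul_mem' {g h} hg hh := by
        change D.r (g * h) * D.prodE l = D.prodE l
        rw [map_mul, mul_assoc, hh, hg] }
  exact HalfDiagram.mem_of_perm_smul_eq (S := S) hg
    (fun p q hpq ↦ D.r_swap_mul_of_E_mul hδ (D.E_mul_prodE_of_isArcList hb hpq))
    fun p q p' q' h hpq hpq' ↦ D.r_swap_mul_swap_mul_of_E_mul hδ h
      (D.E_mul_prodE_of_isArcList hb hpq) (D.E_mul_prodE_of_isArcList hb hpq')

lemma r_mul_prodE_eq_of_smul_eq_smul {g h : Perm P} (hgh : g • b = h • b) :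
    D.r g * D.prodE l = D.r h * D.prodE l := by
  have hfix : (h⁻¹ * g) • b = b := by rw [mul_smul, hgh, inv_smul_smul]
  nth_rw 2 [← D.r_mul_prodE_of_smul_eq hδ hb hfix]
  rw [← mul_assoc, ← map_mul, mul_inv_cancel_left]

lemma prodE_mul_r_inv_eq_of_smul_eq_smul {g h : Perm P} (hgh : g • b = h • b) :
    D.prodE l * D.r g⁻¹ = D.prodE l * D.r h⁻¹ := by
  have := D.op.r_mul_prodE_eq_of_smul_eq_smul hδ hb hgh
  rw [D.op_prodE hb.nodup] at this
  exact MulOpposite.op_injective this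

omit [Finite P] hδ in
lemma exists_r_mul_prodE_eq (hl' : (endpoints l').Nodup) (hlen : l'.length = l.length)
    (g : Perm P) : ∃ g' h : Perm P, D.r g * D.prodE l' = D.r g' * D.prodE l * D.r h⁻¹ := by
  obtain ⟨h, rfl⟩ := exists_perm_map_arcs_eq hb.nodup hl' hlen.symm
  refine ⟨g * h, h, ?_⟩
  rw [map_mul, mul_assoc (D.r g), D.r_mul_prodE h, mul_assoc, mul_assoc, r_mul_r_inv, mul_one]

variable [Finite M] {Ω : Type*} {rep : Ω → HalfDiagram P M}
  (hrep : Function.Bijective fun p : Perm M × Ω ↦ p.1 • rep p.2)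
include hrep

lemma exists_prodE_mul_r_inv_eq {top : HalfDiagram P M → Perm P} (htop : ∀ x, top x • b = x)
    (h : Perm P) : ∃ (p : Perm P) (ω : Ω),
      D.prodE l * D.r h⁻¹ = D.r p * D.prodE l * D.r (top (rep ω))⁻¹ := by
  obtain ⟨⟨m, ω⟩, hmω⟩ := hrep.surjective (h • b)
  obtain ⟨p, hpl, hp⟩ := (hb.label_smul m).exists_perm_smul_eq hb rfl
  have hsmul : h • b = (top (rep ω) * p⁻¹) • b := by
    rw [mul_smul, inv_smul_eq_iff.2 hp.symm, ← smul_comm m, htop, ← hmω]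
  have hcomm : D.r p * D.prodE l = D.prodE l * D.r p := by rw [D.r_mul_prodE, hpl]
  refine ⟨p, ω, ?_⟩
  rw [D.prodE_mul_r_inv_eq_of_smul_eq_smul hδ hb hsmul, mul_inv_rev, inv_inv, map_mul, hcomm,
    mul_assoc]

theorem exists_diagramsWithArcs_subset_range :
    ∃ f : Ω × HalfDiagram P M → A, D.diagramsWithArcs l.length ⊆ Set.range f := by
  have exists_top (x : HalfDiagram P M) : ∃ g : Perm P, g • b = x := by
    obtain ⟨g, -, hg⟩ := hb.exists_perm_smul_eq x.isArcList_arcs (hb.length_eq x.isArcList_arcs)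
    exact ⟨g, hg⟩
  choose top htop using exists_top
  refine ⟨fun x ↦ D.r (top x.2) * D.prodE l * D.r (top (rep x.1))⁻¹, ?_⟩
  rintro _ ⟨g, l', hl', hlen, rfl⟩
  obtain ⟨g', h, hg'⟩ := D.exists_r_mul_prodE_eq hb hl' hlen g
  obtain ⟨p, ω, hp⟩ := D.exists_prodE_mul_r_inv_eq hδ hb hrep htop h
  refine ⟨(ω, (g' * p) • b), ?_⟩
  calc D.r (top ((g' * p) • b)) * D.prodE l * D.r (top (rep ω))⁻¹
      = D.r (g' * p) * D.prodE l * D.r (top (rep ω))⁻¹ := by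
        rw [D.r_mul_prodE_eq_of_smul_eq_smul hδ hb (htop _)]
    _ = D.r g' * (D.r p * D.prodE l * D.r (top (rep ω))⁻¹) := by
        rw [map_mul]; simp only [mul_assoc]
    _ = D.r g * D.prodE l' := by rw [← hp, hg', mul_assoc]

end NormalForm

end BrauerData

/-! ### Decomposition into matrix algebras -/

lemma pi_surjective_of_exists_eq_and_eq_zero {R V : Type*} [Ring R] [AddCommGroup V] [Module R V]
    {N : ℕ} {W : Fin N → Type*} [∀ i, AddCommGroup (W i)] [∀ i, Module R (W i)]
    {f : ∀ i, V →ₗ[R] W i} (hf : ∀ i w, ∃ v, f i v = w ∧ ∀ j < i, f j v = 0) :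
    Function.Surjective (LinearMap.pi f) := by
  intro w
  have exists_eq_of_lt (k : ℕ) : ∃ v, ∀ i : Fin N, i < k → f i v = w i := by
    induction k with
    | zero => exact ⟨0, by simp⟩
    | succ k ih =>
      obtain ⟨v, hv⟩ := ih
      by_cases hk : k < N
      · obtain ⟨u, hu, hu'⟩ := hf ⟨k, hk⟩ (w ⟨k, hk⟩ - f ⟨k, hk⟩ v)
        refine ⟨v + u, fun i hi ↦ ?_⟩
        obtain hi | hi := Nat.lt_succ_iff_lt_or_eq.1 hi
        · rw [map_add, hv i hi, hu' i hi, add_zero]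
        · obtain rfl : i = ⟨k, hk⟩ := Fin.ext hi
          rw [map_add, hu, add_sub_cancel]
      · exact ⟨v, fun i _ ↦ hv i (by omega)⟩
  obtain ⟨v, hv⟩ := exists_eq_of_lt N
  exact ⟨v, funext fun i ↦ hv i i.2⟩

namespace BrauerData

section Bound

variable {K : Type*} [CommRing K] {δ : K} {P : Type*} [Fintype P] [DecidableEq P]
  {A : Type*} [Ring A] [Algebra K A] (D : BrauerData δ P A) {N : ℕ} {M Ω : Fin N → Type*}

lemma diagrams_subset_iUnion (hN : Fintype.card P < 2 * N) :
    D.diagrams ⊆ ⋃ i : Fin N, D.diagramsWithArcs i := by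
  rintro _ ⟨g, l, hl, rfl⟩
  have := length_endpoints l ▸ hl.length_le_card
  exact Set.mem_iUnion.2 ⟨⟨l.length, by omega⟩, g, l, hl, rfl, rfl⟩

variable [∀ i, Fintype (M i)] {rep : ∀ i, Ω i → HalfDiagram P (M i)}

lemma exists_span_range_eq_top (hδ : IsUnit δ) (hD : D.Generates) (hN : Fintype.card P < 2 * N)
    (hcard : ∀ i : Fin N, 2 * i + Fintype.card (M i) = Fintype.card P)
    (hrep : ∀ i, Function.Bijective fun p : Perm (M i) × Ω i ↦ p.1 • rep i p.2) :
    ∃ f : (Σ i, Ω i × HalfDiagram P (M i)) → A, Submodule.span K (Set.range f) = ⊤ := by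
  have exists_subset_range (i : Fin N) : ∃ f : Ω i × HalfDiagram P (M i) → A,
      D.diagramsWithArcs i ⊆ Set.range f := by
    obtain ⟨b⟩ := HalfDiagram.nonempty_of_card (hcard i)
    have hi : b.arcs.length = i := by
      have := b.isArcList_arcs.two_mul_length_add_card
      have := hcard i
      omega
    rw [← hi]
    exact D.exists_diagramsWithArcs_subset_range hδ b.isArcList_arcs (hrep i)
  choose f hf using exists_subset_range
  refine ⟨fun x ↦ f x.1 x.2, top_unique ?_⟩
  rw [← D.span_diagrams hδ hD]
  refine Submodule.span_mono ((D.diagrams_subset_iUnion hN).trans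
    (Set.iUnion_subset fun i x hx ↦ ?_))
  obtain ⟨y, rfl⟩ := hf i hx
  exact ⟨⟨i, y⟩, rfl⟩

theorem finite_and_finrank_le [Nontrivial K] [∀ i, Finite (Ω i)] (hδ : IsUnit δ)
    (hD : D.Generates) (hN : Fintype.card P < 2 * N)
    (hcard : ∀ i : Fin N, 2 * i + Fintype.card (M i) = Fintype.card P)
    (hrep : ∀ i, Function.Bijective fun p : Perm (M i) × Ω i ↦ p.1 • rep i p.2) :
    Module.Finite K A ∧ finrank K A ≤ ∑ i, Nat.card (Ω i × HalfDiagram P (M i)) := by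
  have := Fintype.ofFinite (Σ i, Ω i × HalfDiagram P (M i))
  obtain ⟨f, hf⟩ := D.exists_span_range_eq_top hδ hD hN hcard hrep
  refine ⟨⟨hf ▸ Submodule.fg_span (Set.finite_range f)⟩, ?_⟩
  calc finrank K A = (Set.range f).finrank K := by rw [Set.finrank, hf, finrank_top]
    _ ≤ Nat.card (Σ i, Ω i × HalfDiagram P (M i)) := by
      rw [Nat.card_eq_fintype_card]
      exact finrank_range_le_card f
    _ = ∑ i, Nat.card (Ω i × HalfDiagram P (M i)) := Nat.card_sigma

end Bound

section Decomposition

variable {k K : Type*} [CommRing k] [Field K] [Algebra k K] {δ : K} {P : Type*} [DecidableEq P]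
  {A : Type*} [Ring A] [Algebra K A] {D : BrauerData δ P A}

lemma IsMorphism.mem_commutant {M : Type*} {ρ : A →ₐ[K] Module.End K (HalfDiagram P M →₀ K)}
    (hρ : D.IsMorphism (HalfDiagram.brauerData K δ P M) ρ) (hδ : IsUnit δ) (hD : D.Generates)
    (a : A) : ρ a ∈ commutant K (Perm M) (HalfDiagram P M) := by
  have h : Submodule.span K D.diagrams ≤
      (commutant K (Perm M) (HalfDiagram P M)).toSubmodule.comap ρ.toLinearMap := by
    refine Submodule.span_le.2 ?_
    rintro _ ⟨g, l, hl, rfl⟩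
    change ρ (D.r g * D.prodE l) ∈ commutant K (Perm M) (HalfDiagram P M)
    rw [map_mul, hρ.map_r, hρ.map_prodE hl]
    exact mul_mem (HalfDiagram.brauerData_r_mem_commutant δ g)
      (HalfDiagram.brauerData_prodE_mem_commutant δ l)
  exact h (D.span_diagrams hδ hD ▸ Submodule.mem_top)

variable [Fintype P]

lemma IsMorphism.eq_zero_of_mem_span {M : Type*} [Fintype M]
    {ρ : A →ₐ[K] Module.End K (HalfDiagram P M →₀ K)}
    (hρ : D.IsMorphism (HalfDiagram.brauerData K δ P M) ρ) {i : ℕ}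
    (hcard : Fintype.card P < 2 * i + Fintype.card M) {a : A}
    (ha : a ∈ Submodule.span K (D.diagramsWithArcs i)) : ρ a = 0 := by
  have h : Submodule.span K (D.diagramsWithArcs i) ≤ LinearMap.ker ρ.toLinearMap := by
    refine Submodule.span_le.2 ?_
    rintro _ ⟨g, l, hl, rfl, rfl⟩
    change ρ (D.r g * D.prodE l) = 0
    rw [map_mul, hρ.map_prodE hl, HalfDiagram.brauerData_prodE_eq_zero δ hl hcard, mul_zero]
  exact h ha

lemma IsMorphism.exists_mem_span_eq {M Ω : Type*} [Fintype M] [Finite Ω]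
    {rep : Ω → HalfDiagram P M} {ρ : A →ₐ[K] Module.End K (HalfDiagram P M →₀ K)}
    (hρ : D.IsMorphism (HalfDiagram.brauerData K δ P M) ρ) (hδ : Transcendental k δ)
    (hrep : Function.Bijective fun p : Perm M × Ω ↦ p.1 • rep p.2) {i : ℕ}
    (hcard : 2 * i + Fintype.card M = Fintype.card P) {w : Module.End K (HalfDiagram P M →₀ K)}
    (hw : w ∈ commutant K (Perm M) (HalfDiagram P M)) :
    ∃ a ∈ Submodule.span K (D.diagramsWithArcs i), ρ a = w := by
  have h := HalfDiagram.commutant_le_span_diagramsWithArcs hrep hδ hcard hw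
  rw [← hρ.image_diagramsWithArcs, ← AlgHom.coe_toLinearMap, ← Submodule.map_span] at h
  exact h

theorem nonempty_algEquiv_pi_matrix {N : ℕ} {M Ω : Fin N → Type*} [∀ i, Fintype (M i)]
    [∀ i, Fintype (Ω i)] [∀ i, DecidableEq (Ω i)] {rep : ∀ i, Ω i → HalfDiagram P (M i)}
    (hrep : ∀ i, Function.Bijective fun p : Perm (M i) × Ω i ↦ p.1 • rep i p.2)
    (hδ : Transcendental k δ) (hD : D.Generates)
    (hlift : ∀ i, ∃ ρ, D.IsMorphism (HalfDiagram.brauerData K δ P (M i)) ρ)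
    (hN : Fintype.card P < 2 * N)
    (hcard : ∀ i : Fin N, 2 * i + Fintype.card (M i) = Fintype.card P) :
    Nonempty (A ≃ₐ[K] ∀ i, Matrix (Ω i) (Ω i) (MonoidAlgebra K (Perm (M i)))) := by
  classical
  have : Nontrivial k := (algebraMap k K).domain_nontrivial
  have hunit : IsUnit δ := .mk0 δ fun h ↦ hδ (h ▸ isAlgebraic_zero)
  choose ρ hρ using hlift
  let e (i : Fin N) := commutantEquivMatrix (K := K) (hrep i)
  let F (i : Fin N) : A →ₐ[K] Matrix (Ω i) (Ω i) (MonoidAlgebra K (Perm (M i))) :=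
    (e i).toAlgHom.comp ((ρ i).codRestrict _ ((hρ i).mem_commutant hunit hD))
  have hsurj : Function.Surjective (LinearMap.pi fun i ↦ (F i).toLinearMap) := by
    refine pi_surjective_of_exists_eq_and_eq_zero fun i w ↦ ?_
    obtain ⟨a, ha, haw⟩ := (hρ i).exists_mem_span_eq hδ (hrep i) (hcard i) ((e i).symm w).2
    refine ⟨a, (e i).toEquiv.eq_symm_apply.1 (Subtype.ext haw), fun j hj ↦ ?_⟩
    have hzero : ρ j a = 0 := (hρ j).eq_zero_of_mem_span (by have := hcard j; omega) ha
    exact (e j).map_eq_zero_iff.2 (Subtype.ext hzero)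
  obtain ⟨hfin, hrank⟩ := D.finite_and_finrank_le hunit hD hN hcard hrep
  simp_rw [← finrank_matrix_monoidAlgebra (K := K) (hrep _), ← finrank_pi_fintype] at hrank
  exact ⟨AlgEquiv.ofBijective (AlgHom.pi F)
    (OrzechProperty.bijective_of_surjective_of_finrank_le _ hsurj hrank)⟩

end Decomposition

end BrauerData

theorem BrauerAlgebra.nonempty_algEquiv_pi_matrix {k K : Type*} [CommRing k] [Field K]
    [Algebra k K] {δ : K} (hδ : Transcendental k δ) (n : ℕ) {N : ℕ} {M Ω : Fin N → Type*}
    [∀ i, Fintype (M i)] [∀ i, Fintype (Ω i)] [∀ i, DecidableEq (Ω i)]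
    {rep : ∀ i, Ω i → HalfDiagram (Fin (n + 1)) (M i)}
    (hrep : ∀ i, Function.Bijective fun p : Perm (M i) × Ω i ↦ p.1 • rep i p.2)
    (hN : n + 1 < 2 * N) (hcard : ∀ i : Fin N, 2 * i + Fintype.card (M i) = n + 1) :
    Nonempty (BrauerAlgebra n (typeA n) K δ ≃ₐ[K]
      ∀ i, Matrix (Ω i) (Ω i) (MonoidAlgebra K (Perm (M i)))) := by
  obtain ⟨D, hr, hE⟩ := exists_brauerData_eq (K := K) (δ := δ) (n := n)
  exact D.nonempty_algEquiv_pi_matrix hrep hδ (generates_of_eq hr hE)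
    (fun i ↦ exists_isMorphism hr hE (HalfDiagram.brauerData K δ _ (M i))) (by simpa) (by simpa)

theorem BrauerAlgebra.moritaEquivalent_pi_monoidAlgebra {k K : Type*} [CommRing k] [Field K]
    [Algebra k K] {δ : K} (hδ : Transcendental k δ) (n : ℕ) {N : ℕ} {M : Fin N → Type}
    [∀ i, Fintype (M i)] (hN : n + 1 < 2 * N)
    (hcard : ∀ i : Fin N, 2 * i + Fintype.card (M i) = n + 1) :
    MoritaEquivalent (BrauerAlgebra n (typeA n) K δ) (∀ i, MonoidAlgebra K (Perm (M i))) := by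
  classical
  let Ω (i : Fin N) := MulAction.orbitRel.Quotient (Perm (M i)) (HalfDiagram (Fin (n + 1)) (M i))
  have nonempty_halfDiagram (i : Fin N) : Nonempty (HalfDiagram (Fin (n + 1)) (M i)) :=
    HalfDiagram.nonempty_of_card (by simpa using hcard i)
  have fintypeOrbits (i : Fin N) : Fintype (Ω i) := Fintype.ofFinite _
  have nonempty_orbits (i : Fin N) : Nonempty (Ω i) := (nonempty_halfDiagram i).map Quotient.mk''
  choose rep hrep using fun i : Fin N ↦ exists_bijective_smul_rep (L := Perm (M i))
    (X := HalfDiagram (Fin (n + 1)) (M i)) fun _ ↦ HalfDiagram.label_smul_injective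
  obtain ⟨e⟩ := nonempty_algEquiv_pi_matrix hδ n hrep hN hcard
  exact (MoritaEquivalent.of_ringEquiv e.toRingEquiv).trans
    (.pi fun i ↦ .matrix (MonoidAlgebra K (Perm (M i))))

theorem brauerAlgebra_typeA_moritaEquivalent_groupAlgebras_general {k K : Type*} [CommRing k]
    [Field K] [Algebra k K] {δ : K} (hδ : Transcendental k δ) (n : ℕ) :
    MoritaEquivalent (BrauerAlgebra n (typeA n) K δ)
      ((i : Fin ((n + 1) / 2 + 1)) → MonoidAlgebra K (Perm (Fin (n + 1 - 2 * (i : ℕ))))) :=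
  BrauerAlgebra.moritaEquivalent_pi_monoidAlgebra hδ n (by omega) fun i ↦ by
    rw [Fintype.card_fin]
    omega

/-- For any field `k` and `n ≥ 2`, the Brauer algebra
`Br(A_{n-1}, k(δ), δ)` over the rational function field `k(δ)` is Morita
equivalent to the direct sum of group algebras `⊕_{i=0}^{⌊n/2⌋} k(δ)[S_{n-2i}]`,
where `S_m` is the symmetric group on `m` letters. -/
theorem brauerAlgebra_typeA_moritaEquivalent_groupAlgebras
    (k : Type) [Field k] (n : ℕ) (hn : 2 ≤ n) :
    MoritaEquivalent (BrauerAlgebra (n - 1) (typeA (n - 1)) (RatFunc k) RatFunc.X)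
      ((i : Fin (n / 2 + 1)) →
        MonoidAlgebra (RatFunc k) (Equiv.Perm (Fin (n - 2 * (i : ℕ))))) := by
  obtain ⟨m, rfl⟩ : ∃ m, n = m + 1 := ⟨n - 1, by omega⟩
  exact brauerAlgebra_typeA_moritaEquivalent_groupAlgebras_general RatFunc.transcendental_X m
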